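/- arXiv:1102.0748 — 2 statements merged into one kernel-verified Lean document; each statement's English description precedes it below -/
import Mathlib

section
/- For every n ≥ 1, the number of parity-reversing pairings on [2n] with exactly 3 crossings equals C(2n, n−3), with the convention that C(2n, n−ℓ) = 0 when ℓ > n; that is, r_{n,3} = C(2n, n−3). -/
open scoped Classical

/-- Asymmetric crossing of two chords: `B = {a,b}` with `a < b` starts strictly
before `C = {c,d}` and they interleave: `a < c < b < d`. -/
def CrossAsym (B C : Finset ℕ) : Prop :=
  ∃ a b c d : ℕ, a < c ∧ c < b ∧ b < d ∧ B = {a, b} ∧ C = {c, d}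

/-- Two blocks cross: `a < c < b < d` or `c < a < d < b`. -/
def Crosses (B C : Finset ℕ) : Prop := CrossAsym B C ∨ CrossAsym C B

/-- A pairing on `[2n] = {1, …, 2n}`: a partition of `{1, …, 2n}` into blocks of size 2. -/
def IsPairing (n : ℕ) (π : Finset (Finset ℕ)) : Prop :=
  (∀ B ∈ π, B.card = 2 ∧ B ⊆ Finset.Icc 1 (2 * n)) ∧
  (∀ x ∈ Finset.Icc 1 (2 * n), ∃! B, B ∈ π ∧ x ∈ B)

/-- Number of crossings of a pairing: the number of unordered pairs of blocks that cross
(each crossing unordered pair `{B, C}` satisfies the asymmetric condition exactly once). -/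
noncomputable def crNum (π : Finset (Finset ℕ)) : ℕ :=
  Set.ncard {p : Finset ℕ × Finset ℕ | p.1 ∈ π ∧ p.2 ∈ π ∧ CrossAsym p.1 p.2}

/-- A pairing is parity-reversing if each block consists of one odd and one even number. -/
def ParityReversing (π : Finset (Finset ℕ)) : Prop :=
  ∀ B ∈ π, ∃ a b : ℕ, B = {a, b} ∧ Odd a ∧ Even b

/-- A pairing is connected if its blocks cannot be split into two nonempty families
with no crossing between the families. -/
def ConnectedPairing (π : Finset (Finset ℕ)) : Prop :=
  ¬ ∃ S T : Finset (Finset ℕ), S ∪ T = π ∧ Disjoint S T ∧ S.Nonempty ∧ T.Nonempty ∧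
      ∀ B ∈ S, ∀ C ∈ T, ¬ Crosses B C

/-- `tCount n k`: the number of pairings on `[2n]` with exactly `k` crossings. -/
noncomputable def tCount (n k : ℕ) : ℕ :=
  Set.ncard {π : Finset (Finset ℕ) | IsPairing n π ∧ crNum π = k}

/-- `rCount n k`: the number of parity-reversing pairings on `[2n]` with exactly `k` crossings. -/
noncomputable def rCount (n k : ℕ) : ℕ :=
  Set.ncard {π : Finset (Finset ℕ) | IsPairing n π ∧ ParityReversing π ∧ crNum π = k}

/-- `bCount n k`: the number of connected parity-reversing pairings on `[2n]`
with exactly `k` crossings. -/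
noncomputable def bCount (n k : ℕ) : ℕ :=
  Set.ncard {π : Finset (Finset ℕ) |
    IsPairing n π ∧ ParityReversing π ∧ ConnectedPairing π ∧ crNum π = k}

/-- `bTot n`: the number of connected parity-reversing pairings on `[2n]` (equals 1 for `n = 0`). -/
noncomputable def bTot (n : ℕ) : ℕ :=
  Set.ncard {π : Finset (Finset ℕ) |
    IsPairing n π ∧ ParityReversing π ∧ ConnectedPairing π}

/-- The Touchard alternating sum `∑_{k=-n}^n (-1)^k q^{k(k-1)/2} C(2n, n+k)`. -/
noncomputable def touchardSum (n : ℕ) (q : ℂ) : ℂ :=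
  ∑ k ∈ Finset.Icc (-(n : ℤ)) (n : ℤ),
    (-1 : ℂ) ^ k * q ^ ((k * (k - 1)) / 2).toNat * ((2 * n).choose ((n : ℤ) + k).toNat : ℂ)

/-- `T_n(q) = ∑_k t_{n,k} q^k` as a complex polynomial function
(all crossing numbers of pairings on `[2n]` satisfy `k ≤ n*n`). -/
noncomputable def Tpoly (n : ℕ) (q : ℂ) : ℂ :=
  ∑ k ∈ Finset.range (n * n + 1), (tCount n k : ℂ) * q ^ k

/-- `T_n(q) = ∑_k t_{n,k} q^k` as a real polynomial function. -/
noncomputable def TpolyR (n : ℕ) (q : ℝ) : ℝ :=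
  ∑ k ∈ Finset.range (n * n + 1), (tCount n k : ℝ) * q ^ k

/-- `R_n(q) = ∑_k r_{n,k} q^k` as a real polynomial function. -/
noncomputable def RpolyR (n : ℕ) (q : ℝ) : ℝ :=
  ∑ k ∈ Finset.range (n * n + 1), (rCount n k : ℝ) * q ^ k

/-- Non-crossing partitions of `{1, …, 2n}` all of whose blocks have even size. -/
noncomputable def NCEvenPartitions (n : ℕ) : Finset (Finset (Finset ℕ)) :=
  ((Finset.Icc 1 (2 * n)).powerset.powerset).filter (fun π =>
    (∀ B ∈ π, B.Nonempty ∧ Even B.card) ∧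
    (∀ x ∈ Finset.Icc 1 (2 * n), ∃! B, B ∈ π ∧ x ∈ B) ∧
    ¬ ∃ a b c d : ℕ, a < b ∧ b < c ∧ c < d ∧
        ∃ B ∈ π, ∃ C ∈ π, B ≠ C ∧ a ∈ B ∧ c ∈ B ∧ b ∈ C ∧ d ∈ C)
def NN : ℕ → ℕ → ℕ
  | 0, j => if j = 0 then 1 else 0
  | m+1, 0 => 2 * NN m 1
  | m+1, j+1 => NN m (j+2) + NN m j

theorem NN_zero : ∀ m j, m < j → NN m j = 0 := by
  intro m
  induction m with
  | zero => intro j h; simp [NN]; omega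
  | succ m ih =>
    intro j h
    obtain ⟨j, rfl⟩ : ∃ i, j = i + 1 := ⟨j - 1, by omega⟩
    rw [NN, ih _ (by omega), ih _ (by omega)]

theorem NN_choose : ∀ m j i, m = j + 2 * i → NN m j = m.choose i := by
  intro m
  induction m with
  | zero =>
    intro j i h
    obtain rfl : j = 0 := by omega
    obtain rfl : i = 0 := by omega
    simp [NN]
  | succ m ih =>
    intro j i h
    rcases j with _ | j
    · obtain ⟨i, rfl⟩ : ∃ i', i = i' + 1 := ⟨i - 1, by omega⟩
      rw [NN, ih 1 i (by omega), Nat.choose_succ_succ']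
      have : m.choose i = m.choose (i+1) := by
        apply Nat.choose_symm_of_eq_add; omega
      omega
    · rcases i with _ | i
      · rw [NN, NN_zero _ _ (by omega), ih j 0 (by omega)]; simp
      · rw [NN, ih (j+2) i (by omega), ih j (i+1) (by omega), Nat.choose_succ_succ]

def WW (m : ℕ) : ℕ → ℕ
  | 0 => NN m 6
  | 1 => NN m 7 + NN m 5
  | h+2 => NN m (h+8) + NN m (h+6) + NN m (h+4) + h * NN m (h+2)

def ff : ℕ → ℕ → List ℕ → ℕ → ℕ
  | 0, _, L, k => if L = [] ∧ k = 0 then 1 else 0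
  | m+1, t, L, k => ff m (t+1) ((t+1)::L) k +
      ∑ i ∈ Finset.range (k+1), if i < L.length ∧ L.getD i 0 % 2 = t % 2 then
        ff m (t+1) (L.eraseIdx i) (k-i) else 0

def Alt : ℕ → List ℕ → Prop
  | _, [] => True
  | t, x::L => x % 2 = t % 2 ∧ Alt (t+1) L

def Bad : ℕ → ℕ → List ℕ → Prop
  | 0, t, x::y::L => x % 2 = (t+1) % 2 ∧ y % 2 = t % 2 ∧ Alt t L
  | e+1, t, x::L => x % 2 = t % 2 ∧ Bad e (t+1) L
  | _, _, _ => False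

theorem Alt_two (L : List ℕ) : ∀ t, Alt (t+2) L ↔ Alt t L := by
  induction L with
  | nil => intro t; simp [Alt]
  | cons x L ih =>
    intro t
    simp only [Alt]
    rw [show t + 2 + 1 = (t+1) + 2 by ring, ih, show (t+2) % 2 = t % 2 by omega]

theorem Bad_two (e : ℕ) : ∀ (L : List ℕ) t, Bad e (t+2) L ↔ Bad e t L := by
  induction e with
  | zero =>
    intro L t
    rcases L with _ | ⟨x, _ | ⟨y, L⟩⟩
    · simp [Bad]
    · simp [Bad]
    · simp only [Bad, Alt_two]
      rw [show (t+2) % 2 = t % 2 by omega, show (t+2+1) % 2 = (t+1) % 2 by omega]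
  | succ e ih =>
    intro L t
    rcases L with _ | ⟨x, L⟩
    · simp [Bad]
    · simp only [Bad]
      rw [show t + 2 + 1 = (t+1) + 2 by ring, ih, show (t+2) % 2 = t % 2 by omega]

theorem ff_not_alt : ∀ m t L, ¬ Alt t L → ff m t L 0 = 0 := by
  intro m
  induction m with
  | zero =>
    intro t L h
    rcases L with _ | ⟨x, L⟩
    · simp [Alt] at h
    · simp [ff]
  | succ m ih =>
    intro t L h
    have h1 : ff m (t+1) ((t+1)::L) 0 = 0 := by
      apply ih
      simpa [Alt, Alt_two] using h
    rw [ff, h1]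
    rcases L with _ | ⟨x, L⟩
    · simp
    · simp only [Alt] at h
      simp
      intro hx
      exact ih _ _ (fun h' => h ⟨hx, h'⟩)

theorem ff_alt : ∀ m t L, Alt t L → ff m t L 0 + NN m (L.length + 2) = NN m L.length := by
  intro m
  induction m with
  | zero =>
    intro t L h
    rcases L with _ | ⟨x, L⟩
    · simp [ff, NN]
    · simp [ff, NN]
  | succ m ih =>
    intro t L h
    have h1 := ih (t+1) ((t+1)::L) (by simpa [Alt, Alt_two] using h)
    rw [ff]
    rcases L with _ | ⟨x, L⟩
    · simp [NN] at h1 ⊢; omega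
    · simp only [Alt] at h
      have h2 := ih _ _ h.2
      simp [h.1, NN] at h1 ⊢
      simp only [add_assoc, Nat.reduceAdd] at *
      omega

theorem ff_bad : ∀ m e t L, Bad e t L → ff m t L 1 + NN m (L.length + 2) = NN m L.length := by
  intro m
  induction m with
  | zero =>
    intro e t L h
    rcases L with _ | ⟨x, L⟩
    · cases e <;> simp [Bad] at h
    · simp [ff, NN]
  | succ m ih =>
    intro e t L h
    have h1 := ih (e+1) (t+1) ((t+1)::L) (by simpa [Bad, Bad_two] using h)
    rw [ff]
    rcases L with _ | ⟨x, L⟩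
    · cases e <;> simp [Bad] at h
    · simp only [List.length_cons] at h1
      rcases e with _ | e
      · rcases L with _ | ⟨y, L⟩
        · simp [Bad] at h
        · simp only [Bad] at h
          have h2 := ff_alt m (t+1) (x::L) (by simp only [Alt, Alt_two]; exact ⟨h.1, h.2.2⟩)
          have : ¬ (x % 2 = t % 2) := by omega
          simp [Finset.sum_range_succ, h.2.1, this, NN] at h1 h2 ⊢
          simp only [add_assoc, Nat.reduceAdd] at *
          omega
      · simp only [Bad] at h
        have h2 := ih _ _ _ h.2
        have h3 : (if 1 < (x::L).length ∧ (x::L).getD 1 0 % 2 = t % 2 then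
            ff m (t+1) ((x::L).eraseIdx 1) 0 else 0) = 0 := by
          split_ifs with h4
          · apply ff_not_alt
            rcases L with _ | ⟨y, L⟩
            · simp at h4
            · simp [Alt]; omega
          · rfl
        simp only [Finset.sum_range_succ, Finset.sum_range_zero, Nat.sub_self, h3]
        simp [h.1, NN] at h1 h2 ⊢
        simp only [add_assoc, Nat.reduceAdd] at *
        omega

theorem ff_three : ∀ m t L, Alt t L → ff m t L 3 = WW m L.length := by
  intro m
  induction m with
  | zero =>
    intro t L h
    rcases L with _ | ⟨x, _ | ⟨y, L⟩⟩ <;> simp [ff, WW, NN]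
  | succ m ih =>
    intro t L h
    have h1 := ih (t+1) ((t+1)::L) (by simpa [Alt, Alt_two] using h)
    rw [ff, h1]
    rcases L with _ | ⟨x, L⟩
    · simp [WW, NN]
    simp only [Alt] at h
    have h2 := ih _ _ h.2
    rcases L with _ | ⟨y, L⟩
    · simp [Finset.sum_range_succ, WW, NN, h.1] at h2 ⊢; omega
    simp only [Alt] at h
    have hy : ¬ (y % 2 = t % 2) := by omega
    rcases L with _ | ⟨z, L⟩
    · simp [Finset.sum_range_succ, WW, NN, h.1, hy] at h2 ⊢; omega
    simp only [Alt] at h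
    have hz : (z % 2 = t % 2) := by omega
    have h3 := ff_bad m 0 (t+1) (x::y::L) (by
      simp only [Bad]; refine ⟨by omega, by omega, ?_⟩
      rw [← Alt_two]; exact h.2.2.2)
    have h4 : (if 3 < (x::y::z::L).length ∧ (x::y::z::L).getD 3 0 % 2 = t % 2 then
            ff m (t+1) ((x::y::z::L).eraseIdx 3) 0 else 0) = 0 := by
      rcases L with _ | ⟨w, L⟩
      · simp
      · have := h.2.2.2.1
        rw [if_neg]; simp; omega
    simp only [Finset.sum_range_succ, Finset.sum_range_zero, Nat.sub_self, h4]
    simp [h.1, hy, hz, WW, NN] at h2 h3 ⊢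
    rw [h2]
    nlinarith

theorem ff_final (n : ℕ) : ff (2*n) 0 [] 3 = if 3 ≤ n then (2 * n).choose (n - 3) else 0 := by
  rw [ff_three _ _ _ (by simp [Alt])]
  simp only [List.length_nil, WW]
  split_ifs with h
  · exact NN_choose _ _ _ (by omega)
  · exact NN_zero _ _ (by omega)

structure GoodP (m t : ℕ) (V : Finset ℕ) (π : Finset (Finset ℕ)) : Prop where
  card : ∀ B ∈ π, B.card = 2 ∧ B ⊆ V ∪ Finset.Ioc t (t+m)
  uniq : ∀ x ∈ V ∪ Finset.Ioc t (t+m), ∃! B, B ∈ π ∧ x ∈ B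
  noL : ∀ B ∈ π, ¬ B ⊆ V
  par : ParityReversing π

theorem GoodP.push {m t : ℕ} {V : Finset ℕ} {π : Finset (Finset ℕ)} :
    (GoodP (m+1) t V π ∧ ∀ x ∈ V, ({x, t+1} : Finset ℕ) ∉ π) ↔
      (GoodP m (t+1) (insert (t+1) V) π) := by
  have hU : V ∪ Finset.Ioc t (t+(m+1)) = insert (t+1) V ∪ Finset.Ioc (t+1) (t+1+m) := by
    ext y; simp only [Finset.mem_union, Finset.mem_Ioc, Finset.mem_insert]
    by_cases y ∈ V <;> simp_all; omega
  constructor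
  · rintro ⟨h, h'⟩
    refine ⟨hU ▸ h.card, hU ▸ h.uniq, ?_, h.par⟩
    intro B hB hs
    obtain ⟨hc, -⟩ := h.card B hB
    have hn := h.noL B hB
    have ht : t+1 ∈ B := by
      by_contra ht
      apply hn
      intro y hy
      have := hs hy
      rw [Finset.mem_insert] at this
      rcases this with rfl | h
      · exact absurd hy ht
      · exact h
    obtain ⟨a, b, hab, rfl⟩ := Finset.card_eq_two.1 hc
    simp only [Finset.mem_insert, Finset.mem_singleton] at ht
    have ha : a ∈ insert (t+1) V := hs (by simp)
    have hb : b ∈ insert (t+1) V := hs (by simp)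
    rw [Finset.mem_insert] at ha hb
    rcases ht with rfl | rfl
    · rw [Finset.pair_comm] at hB
      exact h' b (hb.resolve_left (Ne.symm hab)) hB
    · exact h' a (ha.resolve_left hab) hB
  · intro h
    refine ⟨⟨hU ▸ h.card, hU ▸ h.uniq, ?_, h.par⟩, ?_⟩
    · intro B hB hs
      exact h.noL B hB (hs.trans (Finset.subset_insert _ _))
    · intro x hx hB
      apply h.noL _ hB
      intro y hy
      simp only [Finset.mem_insert, Finset.mem_singleton] at hy ⊢
      rcases hy with rfl | rfl
      · exact Or.inr hx
      · exact Or.inl rfl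

theorem pop_U {m t x : ℕ} {V : Finset ℕ} (hV : ∀ x ∈ V, x ≤ t) (hx : x ∈ V) (y : ℕ) :
    y ∈ V.erase x ∪ Finset.Ioc (t+1) (t+1+m) ↔
      y ∈ V ∪ Finset.Ioc t (t+(m+1)) ∧ y ∉ ({x, t+1} : Finset ℕ) := by
  have := hV x hx
  have h2 := hV y
  simp only [Finset.mem_union, Finset.mem_Ioc, Finset.mem_insert, Finset.mem_erase,
    Finset.mem_singleton]
  by_cases hy : y ∈ V
  · have := h2 hy
    simp only [hy, and_true, true_or, true_and]
    omega
  · have : y ≠ x := by rintro rfl; exact hy hx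
    simp only [hy, and_false, false_or]
    omega

theorem GoodP.pop {m t x : ℕ} {V : Finset ℕ} {π : Finset (Finset ℕ)} (hV : ∀ x ∈ V, x ≤ t)
    (hx : x ∈ V) (hp : x % 2 = t % 2)
    (h : GoodP m (t+1) (V.erase x) π) :
    GoodP (m+1) t V (insert {x, t+1} π) ∧ ({x, t+1} : Finset ℕ) ∉ π := by
  have hxt := hV x hx
  have hdis : ∀ B ∈ π, ∀ y ∈ B, y ∉ ({x, t+1} : Finset ℕ) := fun B hB y hy =>
    ((pop_U hV hx y).1 ((h.card B hB).2 hy)).2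
  have hnot : ({x, t+1} : Finset ℕ) ∉ π := fun hB => hdis _ hB x (by simp) (by simp)
  refine ⟨⟨?_, ?_, ?_, ?_⟩, hnot⟩
  · intro B hB
    rcases Finset.mem_insert.1 hB with rfl | hB
    · refine ⟨Finset.card_pair (by omega), ?_⟩
      intro y hy
      simp only [Finset.mem_insert, Finset.mem_singleton] at hy
      rcases hy with rfl | rfl <;> simp [hx]
    · exact ⟨(h.card B hB).1, fun y hy => ((pop_U hV hx y).1 ((h.card B hB).2 hy)).1⟩
  · intro y hy
    by_cases hyx : y ∈ ({x, t+1} : Finset ℕ)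
    · refine ⟨{x, t+1}, ⟨by simp, hyx⟩, ?_⟩
      rintro C ⟨hC, hyC⟩
      rcases Finset.mem_insert.1 hC with rfl | hC
      · rfl
      · exact absurd hyx (hdis C hC y hyC)
    · obtain ⟨B, ⟨hB, hyB⟩, hu⟩ := h.uniq y ((pop_U hV hx y).2 ⟨hy, hyx⟩)
      refine ⟨B, ⟨Finset.mem_insert_of_mem hB, hyB⟩, ?_⟩
      rintro C ⟨hC, hyC⟩
      rcases Finset.mem_insert.1 hC with rfl | hC
      · exact absurd hyC hyx
      · exact hu C ⟨hC, hyC⟩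
  · intro B hB hs
    rcases Finset.mem_insert.1 hB with rfl | hB
    · have := hV (t+1) (hs (by simp)); omega
    · apply h.noL B hB
      intro y hy
      have := hdis B hB y hy
      simp at this
      simp [this, hs hy]
  · intro B hB
    rcases Finset.mem_insert.1 hB with rfl | hB
    · rcases Nat.even_or_odd x with hx' | hx'
      · refine ⟨t+1, x, Finset.pair_comm _ _, ?_, hx'⟩
        rw [Nat.even_iff] at hx'; rw [Nat.odd_iff]; omega
      · refine ⟨x, t+1, rfl, hx', ?_⟩
        rw [Nat.odd_iff] at hx'; rw [Nat.even_iff]; omega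
    · exact h.par B hB

theorem GoodP.unpop {m t x : ℕ} {V : Finset ℕ} {π : Finset (Finset ℕ)} (hV : ∀ x ∈ V, x ≤ t)
    (hx : x ∈ V) (h : GoodP (m+1) t V π) (hB : ({x, t+1} : Finset ℕ) ∈ π) :
    x % 2 = t % 2 ∧ GoodP m (t+1) (V.erase x) (π.erase {x, t+1}) := by
  have hxt := hV x hx
  have hdis : ∀ B ∈ π.erase {x, t+1}, ∀ y ∈ B, y ∉ ({x, t+1} : Finset ℕ) := by
    intro B hB' y hy hyx
    rw [Finset.mem_erase] at hB'
    obtain ⟨C, -, hu⟩ := h.uniq y ((h.card B hB'.2).2 hy)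
    exact hB'.1 ((hu B ⟨hB'.2, hy⟩).trans (hu _ ⟨hB, hyx⟩).symm)
  refine ⟨?_, ?_, ?_, ?_, ?_⟩
  · obtain ⟨a, b, hab, ha, hb⟩ := h.par _ hB
    have h1 : x ∈ ({a, b} : Finset ℕ) := by rw [← hab]; simp
    have h2 : t+1 ∈ ({a, b} : Finset ℕ) := by rw [← hab]; simp
    have h3 : a ∈ ({x, t+1} : Finset ℕ) := by rw [hab]; simp
    have h4 : b ∈ ({x, t+1} : Finset ℕ) := by rw [hab]; simp
    simp only [Finset.mem_insert, Finset.mem_singleton] at h1 h2 h3 h4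
    rw [Nat.odd_iff] at ha
    rw [Nat.even_iff] at hb
    omega
  · intro B hB'
    have h1 := h.card B (Finset.mem_of_mem_erase hB')
    exact ⟨h1.1, fun y hy => (pop_U hV hx y).2 ⟨h1.2 hy, hdis B hB' y hy⟩⟩
  · intro y hy
    obtain ⟨hy1, hy2⟩ := (pop_U hV hx y).1 hy
    obtain ⟨B, ⟨hB1, hyB⟩, hu⟩ := h.uniq y hy1
    refine ⟨B, ⟨Finset.mem_erase.2 ⟨?_, hB1⟩, hyB⟩, ?_⟩
    · rintro rfl; exact hy2 hyB
    · rintro C ⟨hC, hyC⟩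
      exact hu C ⟨Finset.mem_of_mem_erase hC, hyC⟩
  · intro B hB' hs
    exact h.noL B (Finset.mem_of_mem_erase hB') (hs.trans (Finset.erase_subset _ _))
  · intro B hB'
    exact h.par B (Finset.mem_of_mem_erase hB')

theorem pair_lt_eq {a b c d : ℕ} (h : ({a, b} : Finset ℕ) = {c, d}) (h1 : a < b) (h2 : c < d) :
    a = c ∧ b = d := by
  have e1 : a ∈ ({c, d} : Finset ℕ) := by rw [← h]; simp
  have e2 : b ∈ ({c, d} : Finset ℕ) := by rw [← h]; simp
  simp only [Finset.mem_insert, Finset.mem_singleton] at e1 e2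
  omega

theorem crNum_pop {m t x : ℕ} {V : Finset ℕ} {π : Finset (Finset ℕ)} (hV : ∀ x ∈ V, x ≤ t)
    (hx : x ∈ V) (h : GoodP m (t+1) (V.erase x) π) :
    crNum (insert {x, t+1} π) = (V.filter (x < ·)).card + crNum π := by
  have hxt := hV x hx
  have hUt : ∀ B ∈ π, ∀ y ∈ B, y ≠ x ∧ y ≠ t+1 ∧ (y ∈ V ∨ t + 1 < y) := by
    intro B hB y hy
    have := (h.card B hB).2 hy
    simp only [Finset.mem_union, Finset.mem_Ioc, Finset.mem_erase] at this
    rcases this with h1 | h1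
    · have := hV y h1.2; exact ⟨h1.1, by omega, Or.inl h1.2⟩
    · exact ⟨by omega, by omega, Or.inr (by omega)⟩
  -- pairs with the new block
  set P : Set (Finset ℕ × Finset ℕ) := {p | p.1 ∈ π ∧ p.2 ∈ π ∧ CrossAsym p.1 p.2} with hP
  set Q : Set (Finset ℕ × Finset ℕ) :=
    {p | p.1 = {x, t+1} ∧ p.2 ∈ π ∧ CrossAsym p.1 p.2} with hQ
  have hnot : ({x, t+1} : Finset ℕ) ∉ π := fun hB => (hUt _ hB x (by simp)).1 rfl
  have hunion : {p : Finset ℕ × Finset ℕ | p.1 ∈ insert {x, t+1} π ∧ p.2 ∈ insert {x, t+1} π ∧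
      CrossAsym p.1 p.2} = Q ∪ P := by
    ext ⟨B, C⟩
    simp only [Set.mem_ofPred_eq, Set.mem_union, Finset.mem_insert, hP, hQ]
    constructor
    · rintro ⟨h1, h2, h3⟩
      have hC : C ∈ π := by
        rcases h2 with h2 | h2
        · exfalso
          obtain ⟨a, b, c, d, hac, hcb, hbd, rfl, rfl⟩ := h3
          obtain ⟨rfl, rfl⟩ := pair_lt_eq h2 (by omega) (by omega)
          rcases h1 with h1 | h1
          · obtain ⟨rfl, rfl⟩ := pair_lt_eq h1 (by omega) (by omega); omega
          · have ha := hUt _ h1 a (by simp)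
            have hb := hUt _ h1 b (by simp)
            apply h.noL _ h1
            intro y hy
            simp only [Finset.mem_insert, Finset.mem_singleton] at hy
            rw [Finset.mem_erase]
            rcases hy with rfl | rfl
            · exact ⟨ha.1, ha.2.2.resolve_right (by omega)⟩
            · exact ⟨hb.1, hb.2.2.resolve_right (by omega)⟩
        · exact h2
      rcases h1 with h1 | h1
      · exact Or.inl ⟨h1, hC, h3⟩
      · exact Or.inr ⟨h1, hC, h3⟩
    · rintro (⟨h1, h2, h3⟩ | ⟨h1, h2, h3⟩)
      · exact ⟨Or.inl h1, Or.inr h2, h3⟩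
      · exact ⟨Or.inr h1, Or.inr h2, h3⟩
  have hPf : P.Finite := by
    refine (Finset.finite_toSet (π ×ˢ π)).subset ?_
    rintro ⟨B, C⟩ ⟨h1, h2, -⟩
    simp only [Finset.mem_coe, Finset.mem_product]
    exact ⟨h1, h2⟩
  have hQf : Q.Finite := by
    refine (Finset.finite_toSet ({{x, t+1}} ×ˢ π)).subset ?_
    rintro ⟨B, C⟩ ⟨h1, h2, -⟩
    simp only [Finset.mem_coe, Finset.mem_product, Finset.mem_singleton]
    exact ⟨h1, h2⟩
  have hd : Disjoint Q P := by
    rw [Set.disjoint_left]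
    rintro ⟨B, C⟩ ⟨h1, -, -⟩ ⟨h2, -, -⟩
    exact hnot (h1 ▸ h2)
  have hQc : Q.ncard = (V.filter (x < ·)).card := by
    have key : ∀ c ∈ V.filter (x < ·), ∃ d, t + 1 < d ∧ ({c, d} : Finset ℕ) ∈ π := by
      intro c hc
      rw [Finset.mem_filter] at hc
      obtain ⟨B, ⟨hB, hcB⟩, -⟩ := h.uniq c (by simp; left; exact ⟨by omega, hc.1⟩)
      obtain ⟨a, b, hab, rfl⟩ := Finset.card_eq_two.1 (h.card B hB).1
      have ha := hUt _ hB a (by simp)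
      have hb := hUt _ hB b (by simp)
      have hne := h.noL _ hB
      simp only [Finset.mem_insert, Finset.mem_singleton] at hcB
      rcases hcB with rfl | rfl
      · refine ⟨b, ?_, hB⟩
        refine hb.2.2.resolve_left fun hbV => hne ?_
        intro y hy
        simp only [Finset.mem_insert, Finset.mem_singleton] at hy
        rw [Finset.mem_erase]
        rcases hy with rfl | rfl
        · exact ⟨ha.1, hc.1⟩
        · exact ⟨hb.1, hbV⟩
      · refine ⟨a, ?_, by rwa [Finset.pair_comm]⟩
        refine ha.2.2.resolve_left fun haV => hne ?_
        intro y hy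
        simp only [Finset.mem_insert, Finset.mem_singleton] at hy
        rw [Finset.mem_erase]
        rcases hy with rfl | rfl
        · exact ⟨ha.1, haV⟩
        · exact ⟨hb.1, hc.1⟩
    choose! g hg1 hg2 using key
    rw [← Set.ncard_coe_finset]
    symm
    apply Set.ncard_congr (fun c _ => (({x, t+1} : Finset ℕ), ({c, g c} : Finset ℕ)))
    · intro c hc
      have hc' := hc
      rw [Finset.mem_coe] at hc hc'
      rw [Finset.mem_filter] at hc'
      have := hV c hc'.1
      have := hg1 c hc
      exact ⟨rfl, hg2 c hc, x, t+1, c, g c, hc'.2, by omega, by omega, rfl, rfl⟩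
    · intro c c' hc hc' he
      rw [Finset.mem_coe] at hc hc'
      have h1 := hg1 c hc
      have h2 := hg1 c' hc'
      have := hV c (Finset.mem_filter.1 hc).1
      have := hV c' (Finset.mem_filter.1 hc').1
      exact (pair_lt_eq (Prod.mk.inj he).2 (by omega) (by omega)).1
    · rintro ⟨B, C⟩ ⟨h1, h2, a, b, c, d, hac, hcb, hbd, h3, h4⟩
      simp only at h1 h2 h3 h4
      subst h1
      subst h4
      obtain ⟨rfl, rfl⟩ := pair_lt_eq h3 (by omega) (by omega)
      have hc := hUt _ h2 c (by simp)
      have hcV : c ∈ V.filter (x < ·) :=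
        Finset.mem_filter.2 ⟨hc.2.2.resolve_right (by omega), hac⟩
      refine ⟨c, hcV, ?_⟩
      have hne := hg1 c hcV
      have hu := (h.uniq c (by
        rw [Finset.mem_union, Finset.mem_erase]
        exact Or.inl ⟨hc.1, (Finset.mem_filter.1 hcV).1⟩)).unique
        ⟨hg2 c hcV, by simp⟩ ⟨h2, by simp⟩
      rw [hu]
  unfold crNum
  rw [hunion, Set.ncard_union_eq hd hQf hPf, hQc]

theorem list_erase (L : List ℕ) : ∀ i, L.Nodup → i < L.length →
    (L.eraseIdx i).toFinset = L.toFinset.erase (L.getD i 0) := by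
  intro i hL hi
  rw [List.getD_eq_getElem _ _ hi]
  ext y
  simp only [List.mem_toFinset, Finset.mem_erase]
  rw [← List.Nodup.erase_getElem hL i hi, hL.mem_erase_iff]

theorem list_above (L : List ℕ) : ∀ i, L.Pairwise (· > ·) → i < L.length →
    (L.toFinset.filter (L.getD i 0 < ·)).card = i := by
  induction L with
  | nil => intro i _ h; simp at h
  | cons x L ih =>
    intro i h hi
    rw [List.pairwise_cons] at h
    rcases i with _ | i
    · simp only [List.getD_cons_zero, Finset.card_eq_zero, Finset.filter_eq_empty_iff]
      intro y hy
      rw [List.mem_toFinset, List.mem_cons] at hy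
      rcases hy with rfl | hy
      · simp
      · have := h.1 y hy; omega
    · have hi' : i < L.length := by simpa using hi
      have hm : L.getD i 0 ∈ L := by
        rw [List.getD_eq_getElem _ _ hi']; exact List.getElem_mem _
      rw [List.getD_cons_succ, List.toFinset_cons, Finset.filter_insert, if_pos (h.1 _ hm),
        Finset.card_insert_of_notMem, ih i h.2 hi']
      intro hx
      have := h.1 x (List.mem_toFinset.1 (Finset.mem_filter.1 hx).1)
      omega

noncomputable def FS (m t : ℕ) (L : List ℕ) (k : ℕ) : Finset (Finset (Finset ℕ)) :=
  ((Finset.range (t+m+1)).powerset.powerset).filter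
    (fun π => GoodP m t L.toFinset π ∧ crNum π = k)

theorem mem_FS {m t : ℕ} {L : List ℕ} {k : ℕ} (hL : ∀ x ∈ L, x ≤ t) (π : Finset (Finset ℕ)) :
    π ∈ FS m t L k ↔ GoodP m t L.toFinset π ∧ crNum π = k := by
  unfold FS
  rw [Finset.mem_filter, and_iff_right_iff_imp]
  rintro ⟨h, -⟩
  rw [Finset.mem_powerset]
  intro B hB
  rw [Finset.mem_powerset]
  intro y hy
  have := (h.card B hB).2 hy
  rw [Finset.mem_union, List.mem_toFinset, Finset.mem_Ioc] at this
  rw [Finset.mem_range]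
  rcases this with h | h
  · have := hL y h; omega
  · omega

theorem crNum_empty : crNum ∅ = 0 := by
  simp [crNum]

theorem FS_card : ∀ m t L k, L.Pairwise (· > ·) → (∀ x ∈ L, x ≤ t) →
    (FS m t L k).card = ff m t L k := by
  intro m
  induction m with
  | zero =>
    intro t L k hs hL
    rw [ff]
    have hmem : ∀ π, π ∈ FS 0 t L k ↔ (L = [] ∧ k = 0) ∧ π = ∅ := by
      intro π
      rw [mem_FS hL]
      constructor
      · rintro ⟨h, hk⟩
        have hπ : π = ∅ := by
          rw [Finset.eq_empty_iff_forall_notMem]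
          intro B hB
          apply h.noL B hB
          simpa using (h.card B hB).2
        subst hπ
        refine ⟨⟨?_, by rw [← hk, crNum_empty]⟩, rfl⟩
        rw [List.eq_nil_iff_forall_not_mem]
        intro x hx
        obtain ⟨B, ⟨hB, -⟩, -⟩ := h.uniq x (by simp [hx])
        simp at hB
      · rintro ⟨⟨rfl, rfl⟩, rfl⟩
        refine ⟨⟨?_, ?_, ?_, ?_⟩, crNum_empty⟩
        · simp
        · simp
        · simp
        · intro B hB; simp at hB
    split_ifs with h
    · rw [Finset.card_eq_one]
      refine ⟨∅, ?_⟩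
      ext π
      rw [hmem, Finset.mem_singleton]
      exact ⟨fun h => h.2, fun h' => ⟨h, h'⟩⟩
    · rw [Finset.card_eq_zero, Finset.eq_empty_iff_forall_notMem]
      intro π hπ
      exact h ((hmem π).1 hπ).1
  | succ m ih =>
    intro t L k hs hL
    have hLV : ∀ x ∈ L.toFinset, x ≤ t := fun x hx => hL x (List.mem_toFinset.1 hx)
    have hnd : L.Nodup := hs.imp (fun h => ne_of_gt h)
    have hL1 : ∀ x ∈ (t+1)::L, x ≤ t+1 := by
      intro x hx
      rw [List.mem_cons] at hx
      rcases hx with rfl | hx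
      · exact le_rfl
      · have := hL x hx; omega
    have hs1 : ((t+1)::L).Pairwise (· > ·) := by
      rw [List.pairwise_cons]
      exact ⟨fun x hx => by have := hL x hx; omega, hs⟩
    have hL2 : ∀ i, ∀ x ∈ L.eraseIdx i, x ≤ t+1 := fun i x hx => by
      have := hL x (List.mem_of_mem_eraseIdx hx); omega
    have hs2 : ∀ i, (L.eraseIdx i).Pairwise (· > ·) := fun i =>
      hs.sublist (List.eraseIdx_sublist _ _)
    have hget : ∀ i, i < L.length → L.getD i 0 ∈ L.toFinset := by
      intro i hi
      rw [List.getD_eq_getElem _ _ hi, List.mem_toFinset]; exact List.getElem_mem _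
    -- elements of the pop sets
    have hpop : ∀ i, i < L.length → L.getD i 0 % 2 = t % 2 → ∀ k',
        ∀ π ∈ FS m (t+1) (L.eraseIdx i) k',
        GoodP (m+1) t L.toFinset (insert {L.getD i 0, t+1} π) ∧
        ({L.getD i 0, t+1} : Finset ℕ) ∉ π ∧ crNum (insert {L.getD i 0, t+1} π) = i + k' := by
      intro i hi hp k' π hπ
      rw [mem_FS (hL2 i), list_erase L i hnd hi] at hπ
      obtain ⟨h1, h2⟩ := GoodP.pop hLV (hget i hi) hp hπ.1
      refine ⟨h1, h2, ?_⟩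
      rw [crNum_pop hLV (hget i hi) hπ.1, list_above L i hs hi, hπ.2]
    set I := (Finset.range (k+1)).filter (fun i => i < L.length ∧ L.getD i 0 % 2 = t % 2) with hI
    set F : ℕ → Finset (Finset (Finset ℕ)) := fun i =>
      (FS m (t+1) (L.eraseIdx i) (k-i)).image (insert {L.getD i 0, t+1}) with hF
    have hImem : ∀ i, i ∈ I ↔ i ≤ k ∧ i < L.length ∧ L.getD i 0 % 2 = t % 2 := by
      intro i
      rw [hI, Finset.mem_filter, Finset.mem_range]
      constructor <;> rintro ⟨h1, h2⟩ <;> exact ⟨by omega, h2⟩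
    have hFmem : ∀ i ∈ I, ∀ π ∈ F i, GoodP (m+1) t L.toFinset π ∧
        ({L.getD i 0, t+1} : Finset ℕ) ∈ π ∧ crNum π = k := by
      intro i hi π hπ
      rw [hImem] at hi
      rw [hF, Finset.mem_image] at hπ
      obtain ⟨σ, hσ, rfl⟩ := hπ
      obtain ⟨h1, h2, h3⟩ := hpop i hi.2.1 hi.2.2 _ σ hσ
      exact ⟨h1, Finset.mem_insert_self _ _, by rw [h3]; omega⟩
    have hdec : FS (m+1) t L k = FS m (t+1) ((t+1)::L) k ∪ I.biUnion F := by
      ext π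
      rw [Finset.mem_union, mem_FS hL, mem_FS hL1, Finset.mem_biUnion, List.toFinset_cons]
      constructor
      · rintro ⟨h, hk⟩
        by_cases hx : ∀ x ∈ L.toFinset, ({x, t+1} : Finset ℕ) ∉ π
        · left
          exact ⟨GoodP.push.1 ⟨h, hx⟩, hk⟩
        · right
          push Not at hx
          obtain ⟨x, hxL, hxπ⟩ := hx
          obtain ⟨i, hi, hix⟩ := List.getElem_of_mem (List.mem_toFinset.1 hxL)
          have hix' : L.getD i 0 = x := by rw [List.getD_eq_getElem _ _ hi, hix]
          obtain ⟨hp, hg⟩ := GoodP.unpop hLV hxL h hxπ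
          have hc := crNum_pop hLV hxL hg
          rw [Finset.insert_erase hxπ, hk, ← hix', list_above L i hs hi] at hc
          refine ⟨i, (hImem i).2 ⟨by omega, hi, by rw [hix']; exact hp⟩, ?_⟩
          rw [hF, Finset.mem_image]
          refine ⟨π.erase {x, t+1}, ?_, ?_⟩
          · rw [mem_FS (hL2 i), list_erase L i hnd hi, hix']
            refine ⟨hg, ?_⟩
            rw [hix'] at hc; omega
          · rw [hix', Finset.insert_erase hxπ]
      · rintro (⟨h, hk⟩ | ⟨i, hi, hπ⟩)
        · exact ⟨(GoodP.push.2 h).1, hk⟩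
        · obtain ⟨h1, -, h3⟩ := hFmem i hi π hπ
          exact ⟨h1, h3⟩
    have hd1 : Disjoint (FS m (t+1) ((t+1)::L) k) (I.biUnion F) := by
      rw [Finset.disjoint_left]
      intro π h1 h2
      rw [mem_FS hL1, List.toFinset_cons] at h1
      rw [Finset.mem_biUnion] at h2
      obtain ⟨i, hi, hπ⟩ := h2
      exact (GoodP.push.2 h1.1).2 _ (hget i ((hImem i).1 hi).2.1) (hFmem i hi π hπ).2.1
    have hd2 : (I : Set ℕ).PairwiseDisjoint F := by
      intro i hi j hj hij
      rw [Function.onFun, Finset.disjoint_left]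
      intro π h1 h2
      have e1 := hFmem i hi π h1
      have e2 := hFmem j hj π h2
      rw [Finset.mem_coe, hImem] at hi hj
      have e3 := (e1.1.uniq (t+1) (by simp)).unique ⟨e1.2.1, by simp⟩ ⟨e2.2.1, by simp⟩
      have e4 := hLV _ (hget i hi.2.1)
      have e5 := hLV _ (hget j hj.2.1)
      have e6 := (pair_lt_eq e3 (by omega) (by omega)).1
      apply hij
      rw [← list_above L i hs hi.2.1, e6, list_above L j hs hj.2.1]
    rw [hdec, Finset.card_union_of_disjoint hd1, Finset.card_biUnion hd2, ih _ _ _ hs1 hL1, ff,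
      hI, Finset.sum_filter]
    congr 1
    apply Finset.sum_congr rfl
    intro i _
    split_ifs with hi
    · rw [hF, Finset.card_image_of_injOn, ih _ _ _ (hs2 i) (hL2 i)]
      intro σ hσ τ hτ he
      have h1 := (hpop i hi.1 hi.2 _ σ hσ).2.1
      have h2 := (hpop i hi.1 hi.2 _ τ hτ).2.1
      rw [← Finset.erase_insert h1, he, Finset.erase_insert h2]
    · rfl

/-- `r_{n,3} = C(2n, n−3)`, with the convention that the binomial coefficient is `0`
when `3 > n`. -/
theorem rCount_three (n : ℕ) (hn : 1 ≤ n) :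
    rCount n 3 = if 3 ≤ n then (2 * n).choose (n - 3) else 0 := by
  rw [← ff_final, ← FS_card _ _ _ _ List.Pairwise.nil (by simp), ← Set.ncard_coe_finset, rCount]
  congr 1
  ext π
  rw [Finset.mem_coe, mem_FS (by simp), Set.mem_ofPred_eq]
  have hU : ([] : List ℕ).toFinset ∪ Finset.Ioc 0 (0 + 2 * n) = Finset.Icc 1 (2 * n) := by
    ext y; simp; omega
  constructor
  · rintro ⟨⟨h1, h2⟩, h3, h4⟩
    refine ⟨⟨hU ▸ h1, hU ▸ h2, ?_, h3⟩, h4⟩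
    intro B hB hs
    have := (h1 B hB).1
    simp at hs
    simp [hs] at this
  · rintro ⟨h, h4⟩
    exact ⟨⟨hU ▸ h.card, hU ▸ h.uniq⟩, h.par, h4⟩
end

section
/- For every n ≥ 1 and every q ∈ (-1,1), R_n(q) > 0; consequently the function λ_n(q) := (R_n(q))^{1/(2n)} is infinitely differentiable on the open interval (-1,1). -/
open scoped Classical

namespace PRP

def pos {n : ℕ} : Fin n ⊕ Fin n → ℕ
  | Sum.inl i => i.1 + 1
  | Sum.inr i => 2 * n - i.1

lemma pos_inj {n : ℕ} : Function.Injective (pos (n := n)) := by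
  rintro (i | i) (j | j) h <;> simp only [pos] at h <;> have := i.2 <;> have := j.2
  · congr 1; ext; omega
  · omega
  · omega
  · congr 1; ext; omega

lemma pos_mem {n : ℕ} (x : Fin n ⊕ Fin n) : pos x ∈ Finset.Icc 1 (2 * n) := by
  rcases x with i | i <;> simp only [pos, Finset.mem_Icc] <;> have := i.2 <;> omega

lemma pos_surj {n : ℕ} (a : ℕ) (ha : a ∈ Finset.Icc 1 (2 * n)) :
    ∃ x : Fin n ⊕ Fin n, pos x = a := by
  simp only [Finset.mem_Icc] at ha
  by_cases h : a ≤ n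
  · exact ⟨Sum.inl ⟨a - 1, by omega⟩, by simp only [pos]; omega⟩
  · exact ⟨Sum.inr ⟨2 * n - a, by omega⟩, by simp only [pos]; omega⟩

abbrev Word (n : ℕ) := Fin n ⊕ Fin n → Fin n

def V2 {n : ℕ} (f : Word n) : Prop :=
  ∀ l, ∃ x y, Odd (pos x) ∧ Even (pos y) ∧ ∀ z, f z = l ↔ z = x ∨ z = y

noncomputable def blk {n : ℕ} (f : Word n) (l : Fin n) : Finset ℕ :=
  (Finset.univ.filter (fun z => f z = l)).image pos

noncomputable def blocks {n : ℕ} (f : Word n) : Finset (Finset ℕ) :=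
  Finset.univ.image (blk f)

lemma mem_blk {n : ℕ} (f : Word n) (l : Fin n) (a : ℕ) :
    a ∈ blk f l ↔ ∃ z, f z = l ∧ pos z = a := by
  simp [blk]

lemma pos_mem_blk {n : ℕ} (f : Word n) (l : Fin n) (z) :
    pos z ∈ blk f l ↔ f z = l := by
  rw [mem_blk]
  constructor
  · rintro ⟨w, h, e⟩
    rw [← pos_inj e]; exact h
  · intro h; exact ⟨z, h, rfl⟩

lemma blk_eq {n : ℕ} {f : Word n} {l : Fin n} {x y} (h : ∀ z, f z = l ↔ z = x ∨ z = y) :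
    blk f l = {pos x, pos y} := by
  ext a
  rw [mem_blk]
  simp only [h, Finset.mem_insert, Finset.mem_singleton]
  constructor
  · rintro ⟨z, rfl | rfl, rfl⟩ <;> simp
  · rintro (rfl | rfl)
    · exact ⟨x, by simp⟩
    · exact ⟨y, by simp⟩

lemma V2.surj {n : ℕ} {f : Word n} (hf : V2 f) : Function.Surjective f := by
  intro l
  obtain ⟨x, y, -, -, h⟩ := hf l
  exact ⟨x, (h x).2 (Or.inl rfl)⟩

lemma V2.blk_inj {n : ℕ} {f : Word n} (hf : V2 f) : Function.Injective (blk f) := by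
  intro l l' h
  obtain ⟨x, hx⟩ := hf.surj l
  have := (pos_mem_blk f l x).2 hx
  rw [h, pos_mem_blk] at this
  rw [← hx, this]

lemma V2.isPairing {n : ℕ} {f : Word n} (hf : V2 f) : IsPairing n (blocks f) := by
  constructor
  · intro B hB
    simp only [blocks, Finset.mem_image, Finset.mem_univ, true_and] at hB
    obtain ⟨l, rfl⟩ := hB
    obtain ⟨x, y, hx, hy, h⟩ := hf l
    constructor
    · rw [blk_eq h, Finset.card_pair]
      intro e
      rw [e] at hx
      exact (Nat.not_odd_iff_even.2 hy) hx
    · intro a ha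
      obtain ⟨z, -, rfl⟩ := (mem_blk _ _ _).1 ha
      exact pos_mem z
  · intro a ha
    obtain ⟨x, rfl⟩ := pos_surj a ha
    refine ⟨blk f (f x), ⟨by simp [blocks], (pos_mem_blk _ _ _).2 rfl⟩, ?_⟩
    rintro B ⟨hB, hx⟩
    simp only [blocks, Finset.mem_image, Finset.mem_univ, true_and] at hB
    obtain ⟨l, rfl⟩ := hB
    rw [(pos_mem_blk _ _ _).1 hx]

lemma V2.parity {n : ℕ} {f : Word n} (hf : V2 f) : ParityReversing (blocks f) := by
  intro B hB
  simp only [blocks, Finset.mem_image, Finset.mem_univ, true_and] at hB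
  obtain ⟨l, rfl⟩ := hB
  obtain ⟨x, y, hx, hy, h⟩ := hf l
  exact ⟨pos x, pos y, blk_eq h, hx, hy⟩

def X {n : ℕ} (f : Word n) (l l' : Fin n) : Prop :=
  ∃ x y z w, pos x < pos y ∧ pos y < pos z ∧ pos z < pos w ∧
    f x = l ∧ f z = l ∧ f y = l' ∧ f w = l'

lemma V2.blk_pair {n : ℕ} {f : Word n} (hf : V2 f) {l : Fin n} {x z}
    (hx : f x = l) (hz : f z = l) (hne : pos x < pos z) : blk f l = {pos x, pos z} := by
  apply blk_eq
  obtain ⟨a, b, -, -, h⟩ := hf l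
  have hxz : x ≠ z := by rintro rfl; exact lt_irrefl _ hne
  have h1 := (h x).1 hx
  have h2 := (h z).1 hz
  intro t
  rw [h t]
  grind

lemma V2.cross_iff {n : ℕ} {f : Word n} (hf : V2 f) (l l' : Fin n) :
    CrossAsym (blk f l) (blk f l') ↔ X f l l' := by
  constructor
  · rintro ⟨a, b, c, d, h1, h2, h3, hB, hC⟩
    obtain ⟨x, hx, rfl⟩ := (mem_blk f l a).1 (by rw [hB]; simp)
    obtain ⟨z, hz, rfl⟩ := (mem_blk f l b).1 (by rw [hB]; simp)
    obtain ⟨y, hy, rfl⟩ := (mem_blk f l' c).1 (by rw [hC]; simp)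
    obtain ⟨w, hw, rfl⟩ := (mem_blk f l' d).1 (by rw [hC]; simp)
    exact ⟨x, y, z, w, h1, h2, h3, hx, hz, hy, hw⟩
  · rintro ⟨x, y, z, w, h1, h2, h3, hx, hz, hy, hw⟩
    exact ⟨_, _, _, _, h1, h2, h3, hf.blk_pair hx hz (h1.trans h2),
      hf.blk_pair hy hw (h2.trans h3)⟩

noncomputable def crW {n : ℕ} (f : Word n) : ℕ :=
  (Finset.univ.filter (fun p : Fin n × Fin n => X f p.1 p.2)).card

lemma V2.crNum_eq {n : ℕ} {f : Word n} (hf : V2 f) : crNum (blocks f) = crW f := by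
  unfold crNum crW
  rw [← Set.ncard_coe_finset]
  symm
  refine Set.ncard_congr (fun p _ => (blk f p.1, blk f p.2)) ?_ ?_ ?_
  · rintro ⟨l, l'⟩ h
    simp only [Finset.coe_filter, Finset.mem_univ, true_and, Set.mem_ofPred_eq] at h ⊢
    exact ⟨by simp [blocks], by simp [blocks], (hf.cross_iff _ _).2 h⟩
  · rintro ⟨l, l'⟩ ⟨m, m'⟩ - - h
    simp only [Prod.mk.injEq] at h
    rw [hf.blk_inj h.1, hf.blk_inj h.2]
  · rintro ⟨B, C⟩ ⟨hB, hC, h⟩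
    simp only [blocks, Finset.mem_image, Finset.mem_univ, true_and] at hB hC
    obtain ⟨l, rfl⟩ := hB
    obtain ⟨l', rfl⟩ := hC
    exact ⟨(l, l'), by simpa using (hf.cross_iff _ _).1 h, rfl⟩

lemma crW_le {n : ℕ} (f : Word n) : crW f ≤ n * n := by
  unfold crW
  refine (Finset.card_filter_le _ _).trans ?_
  simp

lemma V2.comp {n : ℕ} {f : Word n} (hf : V2 f) (ρ : Equiv.Perm (Fin n)) : V2 (ρ ∘ f) := by
  intro l
  obtain ⟨x, y, hx, hy, h⟩ := hf (ρ.symm l)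
  refine ⟨x, y, hx, hy, fun z => ?_⟩
  rw [← h z, Function.comp_apply, Equiv.eq_symm_apply]

lemma blocks_comp {n : ℕ} (f : Word n) (ρ : Equiv.Perm (Fin n)) :
    blocks (ρ ∘ f) = blocks f := by
  have h : ∀ l, blk (ρ ∘ f) (ρ l) = blk f l := by
    intro l; simp [blk]
  ext B
  simp only [blocks, Finset.mem_image, Finset.mem_univ, true_and]
  constructor
  · rintro ⟨l, rfl⟩
    exact ⟨ρ.symm l, by rw [← h]; simp⟩
  · rintro ⟨l, rfl⟩
    exact ⟨ρ l, h l⟩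

lemma exists_word {n : ℕ} [NeZero n] {π : Finset (Finset ℕ)} (h1 : IsPairing n π)
    (h2 : ParityReversing π) : ∃ f : Word n, V2 f ∧ blocks f = π := by
  have hb : ∀ x : Fin n ⊕ Fin n, ∃ B ∈ π, pos x ∈ B := fun x => by
    obtain ⟨B, hB, -⟩ := h1.2 _ (pos_mem x)
    exact ⟨B, hB⟩
  have hu : ∀ B ∈ π, ∀ C ∈ π, ∀ a, a ∈ B → a ∈ C → B = C := by
    intro B hB C hC a ha hc
    exact (h1.2 a ((h1.1 B hB).2 ha)).unique ⟨hB, ha⟩ ⟨hC, hc⟩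
  have hi : ∀ B ∈ π, ∃ i : Fin n, 2 * i.1 + 1 ∈ B := by
    intro B hB
    obtain ⟨a, b, rfl, ⟨i, hi⟩, hb⟩ := h2 B hB
    have := (h1.1 _ hB).2 (show a ∈ _ by simp)
    simp only [Finset.mem_Icc] at this
    exact ⟨⟨i, by omega⟩, by simp [hi]⟩
  choose b hbm hb using hb
  choose! g hg using hi
  have key : ∀ B ∈ π, ∀ z, g (b z) = g B ↔ pos z ∈ B := by
    intro B hB z
    constructor
    · intro h
      have := hg (b z) (hbm z)
      rw [h] at this
      rw [hu B hB _ (hbm z) _ (hg B hB) this]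
      exact hb z
    · intro h
      rw [hu B hB _ (hbm z) _ h (hb z)]
  have gs : ∀ l : Fin n, ∃ B ∈ π, g B = l := by
    intro l
    obtain ⟨B, ⟨hB, hl⟩, -⟩ := h1.2 (2 * l.1 + 1) (by simp only [Finset.mem_Icc]; omega)
    refine ⟨B, hB, ?_⟩
    obtain ⟨p, r, rfl, ho, he⟩ := h2 B hB
    have := hg _ hB
    simp only [Finset.mem_insert, Finset.mem_singleton] at this hl
    ext
    obtain ⟨r', hr⟩ := he
    omega
  have hV : V2 (fun x => g (b x)) := by
    intro l
    obtain ⟨B, hB, rfl⟩ := gs l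
    obtain ⟨p, r, e, ho, he⟩ := h2 B hB
    obtain ⟨x, hx⟩ := pos_surj p ((h1.1 B hB).2 (by simp [e]))
    obtain ⟨y, hy⟩ := pos_surj r ((h1.1 B hB).2 (by simp [e]))
    refine ⟨x, y, hx ▸ ho, hy ▸ he, fun z => ?_⟩
    rw [key B hB, e, ← hx, ← hy]
    simp [pos_inj.eq_iff]
  have hblk : ∀ B ∈ π, blk (fun x => g (b x)) (g B) = B := by
    intro B hB
    ext a
    rw [mem_blk]
    simp only [key B hB]
    constructor
    · rintro ⟨z, h, rfl⟩; exact h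
    · intro h
      obtain ⟨x, rfl⟩ := pos_surj a ((h1.1 B hB).2 h)
      exact ⟨x, h, rfl⟩
  refine ⟨_, hV, ?_⟩
  ext B
  simp only [blocks, Finset.mem_image, Finset.mem_univ, true_and]
  constructor
  · rintro ⟨l, rfl⟩
    obtain ⟨B, hB, rfl⟩ := gs l
    rw [hblk B hB]; exact hB
  · intro hB
    exact ⟨g B, hblk B hB⟩

lemma fiber_card {n : ℕ} [NeZero n] {π : Finset (Finset ℕ)} (h1 : IsPairing n π)
    (h2 : ParityReversing π) :
    (Finset.univ.filter (fun f : Word n => V2 f ∧ blocks f = π)).card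
      = Fintype.card (Equiv.Perm (Fin n)) := by
  obtain ⟨f, hf, rfl⟩ := exists_word h1 h2
  symm
  refine Finset.card_bij (fun ρ _ => ρ ∘ f) ?_ ?_ ?_
  · intro ρ _
    simp only [Finset.mem_filter, Finset.mem_univ, true_and]
    exact ⟨hf.comp ρ, blocks_comp f ρ⟩
  · intro ρ _ ρ' _ h
    ext l
    obtain ⟨x, rfl⟩ := hf.surj l
    exact congrArg Fin.val (congrFun h x)
  · intro g hg
    simp only [Finset.mem_filter, Finset.mem_univ, true_and] at hg
    obtain ⟨hg, hb⟩ := hg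
    have hfac : ∀ x y, f x = f y → g x = g y := by
      intro x y h
      have hm : blk f (f x) ∈ blocks g := by rw [hb]; simp [blocks]
      simp only [blocks, Finset.mem_image, Finset.mem_univ, true_and] at hm
      obtain ⟨l, hl⟩ := hm
      have hx := (pos_mem_blk f (f x) x).2 rfl
      have hy := (pos_mem_blk f (f x) y).2 h.symm
      rw [← hl, pos_mem_blk] at hx hy
      rw [hx, hy]
    let r : Fin n → Fin n := fun l => g (Function.surjInv hf.surj l)
    have hr : ∀ x, r (f x) = g x := fun x => hfac _ _ (Function.surjInv_eq hf.surj (f x))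
    have hrs : Function.Surjective r := by
      intro l
      obtain ⟨x, rfl⟩ := hg.surj l
      exact ⟨f x, hr x⟩
    refine ⟨Equiv.ofBijective r (Finite.surjective_iff_bijective.1 hrs), Finset.mem_univ _, ?_⟩
    funext x
    exact hr x

lemma count_eq (n k : ℕ) [NeZero n] :
    Fintype.card (Equiv.Perm (Fin n)) * rCount n k =
      (Finset.univ.filter (fun f : Word n => V2 f ∧ crW f = k)).card := by
  have hset : {π : Finset (Finset ℕ) | IsPairing n π ∧ ParityReversing π ∧ crNum π = k}
      = ((Finset.univ.filter (fun f : Word n => V2 f ∧ crW f = k)).image blocks :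
        Finset (Finset (Finset ℕ))) := by
    ext π
    simp only [Set.mem_ofPred_eq, Finset.coe_image, Set.mem_image, Finset.coe_filter,
      Finset.mem_univ, true_and]
    constructor
    · rintro ⟨h1, h2, h3⟩
      obtain ⟨f, hf, rfl⟩ := exists_word h1 h2
      exact ⟨f, ⟨hf, by rw [← hf.crNum_eq, h3]⟩, rfl⟩
    · rintro ⟨f, ⟨hf, h⟩, rfl⟩
      exact ⟨hf.isPairing, hf.parity, by rw [hf.crNum_eq, h]⟩
  unfold rCount
  rw [hset, Set.ncard_coe_finset, mul_comm]
  symm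
  rw [Finset.card_eq_sum_card_image blocks]
  rw [Finset.sum_const_nat]
  intro π hπ
  simp only [Finset.mem_image, Finset.mem_filter, Finset.mem_univ, true_and] at hπ
  obtain ⟨f, ⟨hf, h⟩, rfl⟩ := hπ
  rw [← fiber_card hf.isPairing hf.parity]
  congr 1
  ext g
  simp only [Finset.mem_filter, Finset.mem_univ, true_and]
  constructor
  · rintro ⟨⟨a, b⟩, c⟩; exact ⟨a, c⟩
  · rintro ⟨a, c⟩
    exact ⟨⟨a, by rw [← a.crNum_eq, c, hf.crNum_eq, h]⟩, c⟩

lemma poly_eq (n : ℕ) [NeZero n] (q : ℝ) :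
    (Fintype.card (Equiv.Perm (Fin n)) : ℝ) * RpolyR n q =
      ∑ f : Word n, if V2 f then q ^ crW f else 0 := by
  unfold RpolyR
  rw [Finset.mul_sum, ← Finset.sum_filter]
  have hm : ∀ f ∈ Finset.univ.filter (fun f : Word n => V2 f),
      crW f ∈ Finset.range (n * n + 1) := by
    intro f _
    rw [Finset.mem_range]
    exact Nat.lt_succ_of_le (crW_le f)
  rw [← Finset.sum_fiberwise_of_maps_to hm]
  apply Finset.sum_congr rfl
  intro k _
  rw [← mul_assoc, ← Nat.cast_mul, count_eq, Finset.filter_filter]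
  rw [Finset.sum_congr rfl (g := fun _ => q ^ k)]
  · simp
  · intro f hf
    simp only [Finset.mem_filter, Finset.mem_univ, true_and] at hf
    rw [hf.2]

abbrev Half (n : ℕ) := Fin n → Fin n

def Good {n : ℕ} (u : Half n) : Prop := ∀ i j, u i = u j → (Even i.1 ↔ Even j.1) → i = j

noncomputable def So {n : ℕ} (u : Half n) : Finset (Fin n) :=
  Finset.univ.filter (fun l => ∃ i, u i = l ∧ Even i.1)

noncomputable def Se {n : ℕ} (u : Half n) : Finset (Fin n) :=
  Finset.univ.filter (fun l => ∃ i, u i = l ∧ ¬ Even i.1)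

lemma mem_So {n : ℕ} (u : Half n) (l) : l ∈ So u ↔ ∃ i, u i = l ∧ Even i.1 := by simp [So]
lemma mem_Se {n : ℕ} (u : Half n) (l) : l ∈ Se u ↔ ∃ i, u i = l ∧ ¬ Even i.1 := by
  simp only [Se, Finset.mem_filter, Finset.mem_univ, true_and]

lemma par_inl {n : ℕ} (i : Fin n) : Even (pos (Sum.inl i)) ↔ ¬ Even i.1 := by
  simp only [pos]; grind

lemma par_inr {n : ℕ} (i : Fin n) : Even (pos (Sum.inr i)) ↔ Even i.1 := by
  have := i.2
  simp only [pos]; grind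

lemma V2_iff' {n : ℕ} (f : Word n) : V2 f ↔
    (∀ z w, f z = f w → (Even (pos z) ↔ Even (pos w)) → z = w) ∧
    (∀ l, (∃ z, f z = l ∧ Even (pos z)) ∧ (∃ z, f z = l ∧ ¬ Even (pos z))) := by
  constructor
  · intro h
    constructor
    · intro z w hzw hp
      obtain ⟨x, y, hx, hy, hh⟩ := h (f w)
      have h1 := (hh z).1 hzw
      have h2 := (hh w).1 rfl
      rw [← Nat.not_even_iff_odd] at hx
      grind
    · intro l
      obtain ⟨x, y, hx, hy, hh⟩ := h l
      rw [← Nat.not_even_iff_odd] at hx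
      exact ⟨⟨y, (hh y).2 (Or.inr rfl), hy⟩, ⟨x, (hh x).2 (Or.inl rfl), hx⟩⟩
  · rintro ⟨h1, h2⟩ l
    obtain ⟨⟨y, hy, hy'⟩, ⟨x, hx, hx'⟩⟩ := h2 l
    refine ⟨x, y, Nat.not_even_iff_odd.1 hx', hy', fun z => ⟨fun hz => ?_, ?_⟩⟩
    · by_cases hp : Even (pos z)
      · right; exact h1 z y (hz.trans hy.symm) (by simp [hp, hy'])
      · left; exact h1 z x (hz.trans hx.symm) (by simp [hp, hx'])
    · rintro (rfl | rfl) <;> assumption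

def Valid {n : ℕ} (u v : Half n) : Prop :=
  Good u ∧ Good v ∧ So v = (Se u)ᶜ ∧ Se v = (So u)ᶜ

lemma V2_iff {n : ℕ} (u v : Half n) : V2 (Sum.elim u v) ↔ Valid u v := by
  rw [V2_iff']
  simp only [Sum.forall, Sum.exists, Sum.elim_inl, Sum.elim_inr, par_inl, par_inr, Valid, Good,
    Finset.ext_iff, Finset.mem_compl, mem_So, mem_Se, Sum.inl.injEq, Sum.inr.injEq,
    reduceCtorEq, imp_false, not_not]
  constructor
  · rintro ⟨⟨h1, h2⟩, h3⟩
    refine ⟨fun i j h hp => (h1 i).1 j h (by tauto), fun i j h hp => (h2 i).2 j h hp, ?_, ?_⟩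
    · intro l
      constructor
      · rintro ⟨i, hi, hi'⟩ ⟨j, hj, hj'⟩
        exact (h2 i).1 j (hi.trans hj.symm) (by tauto)
      · intro hn
        exact (h3 l).1.resolve_left hn
    · intro l
      constructor
      · rintro ⟨i, hi, hi'⟩ ⟨j, hj, hj'⟩
        exact (h2 i).1 j (hi.trans hj.symm) (by tauto)
      · intro hn
        exact (h3 l).2.resolve_left hn
  · rintro ⟨h1, h2, h3, h4⟩
    refine ⟨⟨fun i => ⟨fun j h hp => h1 i j h (by tauto), fun j h hp => ?_⟩,
      fun i => ⟨fun j h hp => ?_, fun j h hp => h2 i j h hp⟩⟩, fun l => ⟨?_, ?_⟩⟩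
    · by_cases hj : Even j.1
      · exact (h3 (u i)).1 ⟨j, h.symm, hj⟩ ⟨i, rfl, by tauto⟩
      · exact (h4 (u i)).1 ⟨j, h.symm, hj⟩ ⟨i, rfl, by tauto⟩
    · by_cases hj : Even i.1
      · exact (h3 (u j)).1 ⟨i, h, hj⟩ ⟨j, rfl, by tauto⟩
      · exact (h4 (u j)).1 ⟨i, h, hj⟩ ⟨j, rfl, by tauto⟩
    · by_cases hh : ∃ a, u a = l ∧ ¬ Even a.1
      · exact Or.inl hh
      · exact Or.inr ((h3 l).2 hh)
    · by_cases hh : ∃ a, u a = l ∧ Even a.1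
      · exact Or.inl hh
      · exact Or.inr ((h4 l).2 hh)

def Y {n : ℕ} (u : Half n) (l l' : Fin n) : Prop :=
  ∃ i j k, i < j ∧ j < k ∧ u i = l ∧ u j = l' ∧ u k = l ∧ ∀ m, u m = l' → m = j ∨ k < m

def bef {n : ℕ} (u : Half n) (l l' : Fin n) : Prop := ∃ i j, i < j ∧ u i = l ∧ u j = l'

lemma V2.three {n : ℕ} {f : Word n} (hf : V2 f) {x y z} (h1 : f x = f y) (h2 : f x = f z) :
    x = y ∨ x = z ∨ y = z := by
  have h := ((V2_iff' f).1 hf).1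
  by_cases hx : Even (pos x) <;> by_cases hy : Even (pos y) <;> by_cases hz : Even (pos z)
  all_goals first
    | exact Or.inl (h x y h1 (by tauto))
    | exact Or.inr (Or.inl (h x z h2 (by tauto)))
    | exact Or.inr (Or.inr (h y z (h1.symm.trans h2) (by tauto)))

lemma V2.other {n : ℕ} {f : Word n} (hf : V2 f) (x) : ∃ y, y ≠ x ∧ f y = f x := by
  obtain ⟨⟨y, hy, hy'⟩, ⟨z, hz, hz'⟩⟩ := ((V2_iff' f).1 hf).2 (f x)
  by_cases h : y = x
  · refine ⟨z, ?_, hz⟩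
    rintro rfl
    rw [h] at hy'
    exact hz' hy'
  · exact ⟨y, h, hy⟩

lemma lt_ll {n : ℕ} (i j : Fin n) : pos (Sum.inl i) < pos (Sum.inl j) ↔ i < j := by
  simp [pos]
lemma lt_lr {n : ℕ} (i j : Fin n) : pos (Sum.inl i) < pos (Sum.inr j) := by
  have := i.2; have := j.2
  simp only [pos]; omega
lemma lt_rl {n : ℕ} (i j : Fin n) : ¬ pos (Sum.inr i) < pos (Sum.inl j) := by
  have := i.2; have := j.2
  simp only [pos]; omega
lemma lt_rr {n : ℕ} (i j : Fin n) : pos (Sum.inr i) < pos (Sum.inr j) ↔ j < i := by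
  have := i.2; have := j.2
  simp only [pos, Fin.lt_def]; omega

lemma X_iff {n : ℕ} {u v : Half n} (h : V2 (Sum.elim u v)) (l l' : Fin n) :
    X (Sum.elim u v) l l' ↔ Y u l l' ∨ Y v l' l ∨ (bef u l l' ∧ bef v l' l) := by
  constructor
  · rintro ⟨x, y, z, w, h1, h2, h3, hx, hz, hy, hw⟩
    have uy : ∀ t, Sum.elim u v t = l' → t = y ∨ t = w := by
      intro t ht
      have := h.three (ht.trans hy.symm) (ht.trans hw.symm)
      rcases this with a | a | a
      · exact Or.inl a
      · exact Or.inr a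
      · rw [a] at h2; exact absurd (h2.trans h3) (lt_irrefl _)
    have ux : ∀ t, Sum.elim u v t = l → t = x ∨ t = z := by
      intro t ht
      have := h.three (ht.trans hx.symm) (ht.trans hz.symm)
      rcases this with a | a | a
      · exact Or.inl a
      · exact Or.inr a
      · rw [a] at h1; exact absurd (h1.trans h2) (lt_irrefl _)
    rcases z with k | k
    · left
      rcases y with j | j
      swap
      · exact absurd h2 (lt_rl _ _)
      rcases x with i | i
      swap
      · exact absurd h1 (lt_rl _ _)
      rw [lt_ll] at h1 h2
      refine ⟨i, j, k, h1, h2, hx, hy, hz, fun m hm => ?_⟩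
      rcases uy (Sum.inl m) hm with a | a
      · left; simpa using a
      · right; rw [← a, lt_ll] at h3; exact h3
    · rcases w with w | w
      · exact absurd h3 (lt_rl _ _)
      rw [lt_rr] at h3
      rcases y with j | j
      · right; right
        rcases x with i | i
        swap
        · exact absurd h1 (lt_rl _ _)
        rw [lt_ll] at h1
        exact ⟨⟨i, j, h1, hx, hy⟩, ⟨w, k, h3, hw, hz⟩⟩
      · right; left
        rw [lt_rr] at h2
        refine ⟨w, k, j, h3, h2, hw, hz, hy, fun m hm => ?_⟩
        rcases ux (Sum.inr m) hm with a | a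
        · right; rw [← a, lt_rr] at h1; exact h1
        · left; simpa using a
  · rintro (⟨i, j, k, hij, hjk, hi, hj, hk, hm⟩ | ⟨i, j, k, hij, hjk, hi, hj, hk, hm⟩ |
      ⟨⟨i, j, hij, hi, hj⟩, ⟨i', j', hij', hi', hj'⟩⟩)
    · obtain ⟨w, hw, hw'⟩ := h.other (Sum.inl j)
      refine ⟨Sum.inl i, Sum.inl j, Sum.inl k, w, (lt_ll _ _).2 hij, (lt_ll _ _).2 hjk, ?_,
        hi, hk, hj, hw'.trans hj⟩
      rcases w with w | w
      · rw [lt_ll]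
        exact (hm w (hw'.trans hj)).resolve_left (fun e => hw (by rw [e]))
      · exact lt_lr _ _
    · obtain ⟨w, hw, hw'⟩ := h.other (Sum.inr j)
      refine ⟨w, Sum.inr k, Sum.inr j, Sum.inr i, ?_, (lt_rr _ _).2 hjk, (lt_rr _ _).2 hij,
        hw'.trans hj, hj, hk, hi⟩
      rcases w with w | w
      · exact lt_lr _ _
      · rw [lt_rr]
        exact (hm w (hw'.trans hj)).resolve_left (fun e => hw (by rw [e]))
    · exact ⟨Sum.inl i, Sum.inl j, Sum.inr j', Sum.inr i', (lt_ll _ _).2 hij, lt_lr _ _,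
        (lt_rr _ _).2 hij', hi, hj', hj, hi'⟩

lemma no_ll_r {n : ℕ} {u v : Half n} (h : V2 (Sum.elim u v)) {i k j : Fin n} (hik : i < k)
    (h1 : u i = u k) (h2 : v j = u i) : False := by
  have := h.three (x := Sum.inl i) (y := Sum.inl k) (z := Sum.inr j) h1 h2.symm
  simp at this
  exact absurd this (ne_of_lt hik)

lemma no_rr_l {n : ℕ} {u v : Half n} (h : V2 (Sum.elim u v)) {i k j : Fin n} (hik : i < k)
    (h1 : v i = v k) (h2 : u j = v i) : False := by
  have := h.three (x := Sum.inr i) (y := Sum.inr k) (z := Sum.inl j) h1 h2.symm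
  simp at this
  exact absurd this (ne_of_lt hik)

noncomputable def aN {n : ℕ} (u : Half n) : ℕ :=
  (Finset.univ.filter (fun p : Fin n × Fin n => Y u p.1 p.2)).card

noncomputable def zN {n : ℕ} (u v : Half n) : ℕ :=
  (Finset.univ.filter (fun p : Fin n × Fin n => bef u p.1 p.2 ∧ bef v p.2 p.1)).card

lemma crW_split {n : ℕ} {u v : Half n} (h : V2 (Sum.elim u v)) :
    crW (Sum.elim u v) = aN u + aN v + zN u v := by
  have hsw : aN v = (Finset.univ.filter (fun p : Fin n × Fin n => Y v p.2 p.1)).card := by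
    unfold aN
    refine Finset.card_bij (fun p _ => p.swap) ?_ ?_ ?_
    · rintro ⟨a, b⟩ hp; simpa using hp
    · rintro ⟨a, b⟩ _ ⟨c, d⟩ _ e; simp at e ⊢; tauto
    · rintro ⟨a, b⟩ hp; exact ⟨(b, a), by simpa using hp, rfl⟩
  rw [hsw]
  unfold crW aN zN
  rw [← Finset.card_union_of_disjoint, ← Finset.card_union_of_disjoint]
  · congr 1
    ext p
    simp only [Finset.mem_filter, Finset.mem_univ, true_and, Finset.mem_union, X_iff h]
    tauto
  · rw [Finset.disjoint_left]
    rintro ⟨l, l'⟩ h1 h2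
    simp only [Finset.mem_filter, Finset.mem_univ, true_and, Finset.mem_union] at h1 h2
    obtain ⟨⟨i, j, hij, hi, hj⟩, ⟨i', j', hij', hi', hj'⟩⟩ := h2
    rcases h1 with ⟨a, b, c, hab, hbc, ha, hb, hc, -⟩ | ⟨a, b, c, hab, hbc, ha, hb, hc, -⟩
    · exact no_ll_r h (hab.trans hbc) (ha.trans hc.symm) (hj'.trans ha.symm)
    · exact no_rr_l h (hab.trans hbc) (ha.trans hc.symm) (hj.trans ha.symm)
  · rw [Finset.disjoint_left]
    rintro ⟨l, l'⟩ h1 h2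
    simp only [Finset.mem_filter, Finset.mem_univ, true_and] at h1 h2
    obtain ⟨a, b, c, hab, hbc, ha, hb, hc, -⟩ := h1
    obtain ⟨a', b', c', hab', hbc', ha', hb', hc', -⟩ := h2
    exact no_ll_r h (hab.trans hbc) (ha.trans hc.symm) (hb'.trans ha.symm)

/-- pairs of open labels -/
noncomputable def PO {n : ℕ} (S T : Finset (Fin n)) : Finset (Fin n × Fin n) :=
  Finset.univ.filter (fun p => p.1 < p.2 ∧ ¬ (p.1 ∈ S ↔ p.1 ∈ T) ∧ ¬ (p.2 ∈ S ↔ p.2 ∈ T))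

lemma open_iff_left {n : ℕ} {u v : Half n} (h : Valid u v) {l : Fin n} :
    ¬ (l ∈ So u ↔ l ∈ Se u) ↔ (∃ i, u i = l) ∧ (∃ i, v i = l) := by
  obtain ⟨h1, h2, h3, h4⟩ := h
  have hu : (∃ i, u i = l) ↔ l ∈ So u ∨ l ∈ Se u := by
    rw [mem_So, mem_Se]
    constructor
    · rintro ⟨i, hi⟩
      by_cases he : Even i.1
      · exact Or.inl ⟨i, hi, he⟩
      · exact Or.inr ⟨i, hi, he⟩
    · rintro (⟨i, hi, -⟩ | ⟨i, hi, -⟩) <;> exact ⟨i, hi⟩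
  have hv : (∃ i, v i = l) ↔ l ∈ So v ∨ l ∈ Se v := by
    rw [mem_So, mem_Se]
    constructor
    · rintro ⟨i, hi⟩
      by_cases he : Even i.1
      · exact Or.inl ⟨i, hi, he⟩
      · exact Or.inr ⟨i, hi, he⟩
    · rintro (⟨i, hi, -⟩ | ⟨i, hi, -⟩) <;> exact ⟨i, hi⟩
  rw [hu, hv, h3, h4, Finset.mem_compl, Finset.mem_compl]
  tauto

lemma zN_eq {n : ℕ} {u v : Half n} (h : V2 (Sum.elim u v)) :
    zN u v = ((PO (So u) (Se u)).filter
      (fun p => ¬ (bef u p.1 p.2 ↔ bef v p.1 p.2))).card := by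
  have hV := (V2_iff u v).1 h
  have hbu : ∀ l l', l ≠ l' → (∃ i, u i = l) → (∃ i, v i = l) → (∃ i, u i = l') →
      (∃ i, v i = l') → (bef u l' l ↔ ¬ bef u l l') := by
    rintro l l' hne ⟨i, hi⟩ ⟨i', hi'⟩ ⟨j, hj⟩ ⟨j', hj'⟩
    constructor
    · rintro ⟨a, b, hab, ha, hb⟩ ⟨c, d, hcd, hc, hd⟩
      have e1 : b = c := by
        rcases lt_trichotomy b c with g | g | g
        · exact (no_ll_r h g (hb.trans hc.symm) (hi'.trans hb.symm)).elim
        · exact g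
        · exact (no_ll_r h g (hc.trans hb.symm) (hi'.trans hc.symm)).elim
      have e2 : a < d := hab.trans (e1 ▸ hcd)
      exact no_ll_r h e2 (ha.trans hd.symm) (hj'.trans ha.symm)
    · intro hn
      rcases lt_trichotomy i j with g | g | g
      · exact absurd ⟨i, j, g, hi, hj⟩ hn
      · exact absurd (hi.symm.trans (g ▸ hj)) hne
      · exact ⟨j, i, g, hj, hi⟩
  have hbv : ∀ l l', l ≠ l' → (∃ i, u i = l) → (∃ i, v i = l) → (∃ i, u i = l') →
      (∃ i, v i = l') → (bef v l' l ↔ ¬ bef v l l') := by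
    rintro l l' hne ⟨i', hi'⟩ ⟨i, hi⟩ ⟨j', hj'⟩ ⟨j, hj⟩
    constructor
    · rintro ⟨a, b, hab, ha, hb⟩ ⟨c, d, hcd, hc, hd⟩
      have e1 : b = c := by
        rcases lt_trichotomy b c with g | g | g
        · exact (no_rr_l h g (hb.trans hc.symm) (hi'.trans hb.symm)).elim
        · exact g
        · exact (no_rr_l h g (hc.trans hb.symm) (hi'.trans hc.symm)).elim
      have e2 : a < d := hab.trans (e1 ▸ hcd)
      exact no_rr_l h e2 (ha.trans hd.symm) (hj'.trans ha.symm)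
    · intro hn
      rcases lt_trichotomy i j with g | g | g
      · exact absurd ⟨i, j, g, hi, hj⟩ hn
      · exact absurd (hi.symm.trans (g ▸ hj)) hne
      · exact ⟨j, i, g, hj, hi⟩
  have hopen : ∀ l l', bef u l l' → bef v l' l → l ≠ l' ∧ ¬ (l ∈ So u ↔ l ∈ Se u) ∧
      ¬ (l' ∈ So u ↔ l' ∈ Se u) := by
    rintro l l' ⟨i, j, hij, hi, hj⟩ ⟨i', j', hij', hi', hj'⟩
    refine ⟨?_, (open_iff_left hV).2 ⟨⟨i, hi⟩, ⟨j', hj'⟩⟩,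
      (open_iff_left hV).2 ⟨⟨j, hj⟩, ⟨i', hi'⟩⟩⟩
    rintro rfl
    exact no_ll_r h hij (hi.trans hj.symm) (hi'.trans hi.symm)
  unfold zN
  refine Finset.card_bij (fun p _ => if p.1 < p.2 then p else p.swap) ?_ ?_ ?_
  · rintro ⟨l, l'⟩ hp
    simp only [Finset.mem_filter, Finset.mem_univ, true_and] at hp
    obtain ⟨hne, h1, h2⟩ := hopen l l' hp.1 hp.2
    obtain ⟨o1, o2⟩ := (open_iff_left hV).1 h1
    obtain ⟨o3, o4⟩ := (open_iff_left hV).1 h2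
    have b1 := hbu l l' hne o1 o2 o3 o4
    have b2 := hbv l l' hne o1 o2 o3 o4
    by_cases hl : l < l'
    · simp only [hl, if_true, PO, Finset.mem_filter, Finset.mem_univ, true_and]
      tauto
    · have hl' : l' < l := lt_of_le_of_ne (not_lt.1 hl) hne.symm
      simp only [hl, if_false, PO, Finset.mem_filter, Finset.mem_univ, true_and, Prod.swap]
      tauto
  · rintro ⟨l, l'⟩ hp ⟨m, m'⟩ hq e
    simp only [Finset.mem_filter, Finset.mem_univ, true_and] at hp hq
    obtain ⟨hne, h1, h2⟩ := hopen l l' hp.1 hp.2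
    obtain ⟨hne', -, -⟩ := hopen m m' hq.1 hq.2
    obtain ⟨o1, o2⟩ := (open_iff_left hV).1 h1
    obtain ⟨o3, o4⟩ := (open_iff_left hV).1 h2
    have b1 := hbu l l' hne o1 o2 o3 o4
    have b2 := hbv l l' hne o1 o2 o3 o4
    by_cases hl : l < l' <;> by_cases hm : m < m' <;>
      simp only [hl, hm, if_true, if_false, Prod.swap, Prod.mk.injEq] at e ⊢ <;>
      obtain ⟨rfl, rfl⟩ := e <;> tauto
  · rintro ⟨l, l'⟩ hp
    simp only [PO, Finset.mem_filter, Finset.mem_univ, true_and] at hp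
    obtain ⟨⟨hl, h1, h2⟩, hd⟩ := hp
    obtain ⟨o1, o2⟩ := (open_iff_left hV).1 h1
    obtain ⟨o3, o4⟩ := (open_iff_left hV).1 h2
    have b1 := hbu l l' hl.ne o1 o2 o3 o4
    have b2 := hbv l l' hl.ne o1 o2 o3 o4
    by_cases hb : bef u l l'
    · refine ⟨(l, l'), ?_, by simp [hl]⟩
      simp only [Finset.mem_filter, Finset.mem_univ, true_and]
      tauto
    · refine ⟨(l', l), ?_, by simp [hl.le]⟩
      simp only [Finset.mem_filter, Finset.mem_univ, true_and]
      tauto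

noncomputable def sg {n : ℕ} (u : Half n) (p : Fin n × Fin n) : ℝ :=
  if bef u p.1 p.2 then 1 else -1

noncomputable def cf {n : ℕ} (q : ℝ) (P t : Finset (Fin n × Fin n)) : ℝ :=
  ((1 - q) / 2) ^ t.card * ((1 + q) / 2) ^ (P \ t).card

lemma pow_zN {n : ℕ} {u v : Half n} (h : V2 (Sum.elim u v)) (q : ℝ) :
    q ^ zN u v = ∑ t ∈ (PO (So u) (Se u)).powerset,
      cf q (PO (So u) (Se u)) t * ((∏ p ∈ t, sg u p) * ∏ p ∈ t, sg v p) := by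
  rw [zN_eq h, ← Finset.prod_const, Finset.prod_filter]
  have : ∀ p ∈ PO (So u) (Se u), (if ¬ (bef u p.1 p.2 ↔ bef v p.1 p.2) then q else 1)
      = (1 - q) / 2 * (sg u p * sg v p) + (1 + q) / 2 := by
    intro p _
    unfold sg
    by_cases h1 : bef u p.1 p.2 <;> by_cases h2 : bef v p.1 p.2 <;> simp [h1, h2] <;> ring
  rw [Finset.prod_congr rfl this, Finset.prod_add]
  apply Finset.sum_congr rfl
  intro t _
  rw [Finset.prod_mul_distrib, Finset.prod_mul_distrib]
  simp only [Finset.prod_const, cf]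
  ring

noncomputable def U {n : ℕ} (S T : Finset (Fin n)) : Finset (Half n) :=
  Finset.univ.filter (fun u => Good u ∧ So u = S ∧ Se u = T)

noncomputable def F {n : ℕ} (q : ℝ) (S T : Finset (Fin n)) (t : Finset (Fin n × Fin n)) : ℝ :=
  ∑ u ∈ U S T, q ^ aN u * ∏ p ∈ t, sg u p

lemma total_eq {n : ℕ} (q : ℝ) :
    (∑ f : Word n, if V2 f then q ^ crW f else 0) =
    ∑ S : Finset (Fin n), ∑ T : Finset (Fin n), ∑ t ∈ (PO S T).powerset,
      cf q (PO S T) t * (F q S T t * F q Tᶜ Sᶜ t) := by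
  have e1 : (∑ f : Word n, if V2 f then q ^ crW f else 0) =
      ∑ u : Half n, ∑ v : Half n,
        if V2 (Sum.elim u v) then q ^ crW (Sum.elim u v) else 0 := by
    rw [← Fintype.sum_prod_type']
    refine Fintype.sum_equiv (Equiv.sumArrowEquivProdArrow _ _ _) _ _ ?_
    intro f
    have : Sum.elim (Equiv.sumArrowEquivProdArrow _ _ _ f).1
      (Equiv.sumArrowEquivProdArrow _ _ _ f).2 = f := by
      ext (x | x) <;> rfl
    rw [this]
  rw [e1]
  have e2 : ∀ S T : Finset (Fin n), ∑ t ∈ (PO S T).powerset,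
      cf q (PO S T) t * (F q S T t * F q Tᶜ Sᶜ t) =
      ∑ u : Half n, if Good u ∧ So u = S ∧ Se u = T then
        ∑ v : Half n, (if V2 (Sum.elim u v) then q ^ crW (Sum.elim u v) else 0) else 0 := by
    intro S T
    rw [← Finset.sum_filter]
    simp only [F, Finset.sum_mul_sum]
    simp only [Finset.mul_sum]
    rw [Finset.sum_comm]
    apply Finset.sum_congr rfl
    intro u hu
    rw [Finset.sum_comm]
    simp only [U, Finset.mem_filter, Finset.mem_univ, true_and] at hu
    obtain ⟨hg, rfl, rfl⟩ := hu
    rw [← Finset.sum_filter]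
    apply Finset.sum_congr
    · ext v
      simp only [U, Finset.mem_filter, Finset.mem_univ, true_and, V2_iff, Valid]
      tauto
    · intro v hv
      simp only [Finset.mem_filter, Finset.mem_univ, true_and] at hv
      rw [crW_split hv, pow_add, pow_zN hv, Finset.mul_sum]
      apply Finset.sum_congr rfl
      intro t _
      rw [pow_add]
      ring
  simp only [e2]
  symm
  rw [← Fintype.sum_prod_type', Finset.sum_comm]
  apply Finset.sum_congr rfl
  intro u _
  by_cases hg : Good u
  · rw [Finset.sum_eq_single (So u, Se u)]
    · simp [hg]
    · rintro ⟨S, T⟩ _ hne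
      rw [if_neg]
      rintro ⟨-, rfl, rfl⟩
      exact hne rfl
    · simp
  · simp only [hg, false_and, if_false, Finset.sum_const_zero]
    symm
    apply Finset.sum_eq_zero
    intro v _
    rw [if_neg]
    rw [V2_iff]
    exact fun h => hg h.1

lemma card_of_U {n : ℕ} {S T : Finset (Fin n)} {u : Half n} (hu : u ∈ U S T) :
    S.card + T.card = n := by
  simp only [U, Finset.mem_filter, Finset.mem_univ, true_and] at hu
  obtain ⟨hg, rfl, rfl⟩ := hu
  have h1 : So u = (Finset.univ.filter (fun i : Fin n => Even i.1)).image u := by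
    ext l; simp [mem_So, and_comm]
  have h2 : Se u = (Finset.univ.filter (fun i : Fin n => ¬ Even i.1)).image u := by
    ext l
    simp only [mem_Se, Finset.mem_image, Finset.mem_filter, Finset.mem_univ, true_and]
    simp only [and_comm]
  rw [h1, h2, Finset.card_image_of_injOn, Finset.card_image_of_injOn,
    Finset.card_filter_add_card_filter_not]
  · simp
  · intro i hi j hj e
    simp only [Finset.coe_filter, Finset.mem_univ, true_and, Set.mem_ofPred_eq] at hi hj
    exact hg i j e (by tauto)
  · intro i hi j hj e
    simp only [Finset.coe_filter, Finset.mem_univ, true_and, Set.mem_ofPred_eq] at hi hj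
    exact hg i j e (by tauto)

lemma exists_rho {n : ℕ} {S T : Finset (Fin n)} (h : S.card + T.card = n) :
    ∃ ρ : Equiv.Perm (Fin n), (∀ l, ¬ (l ∈ S ↔ l ∈ T) → ρ l = l) ∧
      (∀ l, ρ l ∈ Tᶜ ↔ l ∈ S) ∧ (∀ l, ρ l ∈ Sᶜ ↔ l ∈ T) := by
  have hc : (S ∩ T).card = ((S ∪ T)ᶜ).card := by
    have := Finset.card_union_add_card_inter S T
    rw [Finset.card_compl, Fintype.card_fin]
    omega
  let e := Finset.equivOfCardEq hc
  let r : Fin n → Fin n := fun l =>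
    if h1 : l ∈ S ∩ T then (e ⟨l, h1⟩ : Fin n)
    else if h2 : l ∈ (S ∪ T)ᶜ then (e.symm ⟨l, h2⟩ : Fin n) else l
  have r1 : ∀ l, l ∈ S ∩ T → r l ∈ (S ∪ T)ᶜ := by
    intro l hl
    simp only [r, hl, dif_pos]
    exact (e ⟨l, hl⟩).2
  have d : ∀ l, l ∈ (S ∪ T)ᶜ → l ∉ S ∩ T := by
    intro l hl
    simp only [Finset.mem_compl, Finset.mem_union, Finset.mem_inter] at hl ⊢
    tauto
  have r2 : ∀ l, l ∈ (S ∪ T)ᶜ → r l ∈ S ∩ T := by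
    intro l hl
    simp only [r, d l hl, hl, dif_pos, dif_neg, not_false_eq_true]
    exact (e.symm ⟨l, hl⟩).2
  have r3 : ∀ l, ¬ (l ∈ S ↔ l ∈ T) → r l = l := by
    intro l hl
    have a : l ∉ S ∩ T := by simp only [Finset.mem_inter]; tauto
    have b : l ∉ (S ∪ T)ᶜ := by simp only [Finset.mem_compl, Finset.mem_union]; tauto
    simp only [r, a, b, dif_neg, not_false_eq_true]
  have hinv : Function.Involutive r := by
    intro l
    by_cases h1 : l ∈ S ∩ T
    · have h2 := r1 l h1
      have e0 : r l = e ⟨l, h1⟩ := by simp only [r, h1, dif_pos]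
      have e1 : r (r l) = e.symm ⟨r l, h2⟩ := by
        conv_lhs => rw [show r (r l) = (if h1 : r l ∈ S ∩ T then (e ⟨r l, h1⟩ : Fin n)
          else if h2 : r l ∈ (S ∪ T)ᶜ then (e.symm ⟨r l, h2⟩ : Fin n) else r l) from rfl]
        rw [dif_neg (d _ h2), dif_pos h2]
      rw [e1]
      have : (⟨r l, h2⟩ : {x // x ∈ (S ∪ T)ᶜ}) = e ⟨l, h1⟩ := Subtype.ext e0
      rw [this, Equiv.symm_apply_apply]
    · by_cases h2 : l ∈ (S ∪ T)ᶜ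
      · have h3 := r2 l h2
        have e0 : r l = e.symm ⟨l, h2⟩ := by
          simp only [r, h1, h2, dif_pos, dif_neg, not_false_eq_true]
        have e1 : r (r l) = e ⟨r l, h3⟩ := by
          conv_lhs => rw [show r (r l) = (if h1 : r l ∈ S ∩ T then (e ⟨r l, h1⟩ : Fin n)
            else if h2 : r l ∈ (S ∪ T)ᶜ then (e.symm ⟨r l, h2⟩ : Fin n) else r l) from rfl]
          rw [dif_pos h3]
        rw [e1]
        have : (⟨r l, h3⟩ : {x // x ∈ S ∩ T}) = e.symm ⟨l, h2⟩ := Subtype.ext e0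
        rw [this, Equiv.apply_symm_apply]
      · have : ¬ (l ∈ S ↔ l ∈ T) := by
          simp only [Finset.mem_compl, Finset.mem_union, Finset.mem_inter] at h1 h2
          tauto
        rw [r3 l this, r3 l this]
  refine ⟨hinv.toPerm, r3, ?_, ?_⟩
  all_goals
    intro l
    rw [Function.Involutive.coe_toPerm]
    have a1 := r1 l
    have a2 := r2 l
    have a3 := r3 l
    simp only [Finset.mem_compl, Finset.mem_union, Finset.mem_inter] at a1 a2 ⊢
    by_cases h1 : l ∈ S <;> by_cases h2 : l ∈ T
    · have := a1 ⟨h1, h2⟩; tauto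
    · have := a3 (by tauto); rw [this]; tauto
    · have := a3 (by tauto); rw [this]; tauto
    · have := a2 (by tauto); tauto

lemma aN_comp {n : ℕ} (u : Half n) (ρ : Equiv.Perm (Fin n)) : aN (ρ ∘ u) = aN u := by
  unfold aN
  symm
  refine Finset.card_bij (fun p _ => (ρ p.1, ρ p.2)) ?_ ?_ ?_
  · rintro ⟨a, b⟩ hp
    simpa [Y] using hp
  · rintro ⟨a, b⟩ _ ⟨c, d⟩ _ e
    simpa using e
  · rintro ⟨a, b⟩ hp
    refine ⟨(ρ.symm a, ρ.symm b), ?_, by simp⟩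
    simpa [Y, Equiv.eq_symm_apply] using hp

lemma F_compl {n : ℕ} (q : ℝ) {S T : Finset (Fin n)} (hc : S.card + T.card = n)
    {t : Finset (Fin n × Fin n)} (ht : t ⊆ PO S T) : F q Tᶜ Sᶜ t = F q S T t := by
  obtain ⟨ρ, h1, h2, h3⟩ := exists_rho hc
  unfold F
  symm
  have hmem : ∀ u, ρ ∘ u ∈ U Tᶜ Sᶜ ↔ u ∈ U S T := by
    intro u
    have g : Good (ρ ∘ u) ↔ Good u := by simp [Good]
    have so : ∀ l, ρ l ∈ So (ρ ∘ u) ↔ l ∈ So u := by intro l; simp [mem_So]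
    have se : ∀ l, ρ l ∈ Se (ρ ∘ u) ↔ l ∈ Se u := by intro l; simp [mem_Se]
    have so' : So (ρ ∘ u) = Tᶜ ↔ So u = S := by
      rw [Finset.ext_iff, Finset.ext_iff, ← ρ.forall_congr_right]
      simp only [so, h2]
    have se' : Se (ρ ∘ u) = Sᶜ ↔ Se u = T := by
      rw [Finset.ext_iff, Finset.ext_iff, ← ρ.forall_congr_right]
      simp only [se, h3]
    simp only [U, Finset.mem_filter, Finset.mem_univ, true_and, g, so', se']
  refine Finset.sum_bij (fun u _ => ρ ∘ u) ?_ ?_ ?_ ?_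
  · intro u hu; exact (hmem u).2 hu
  · intro u _ v _ e
    funext i
    exact ρ.injective (congrFun e i)
  · intro v hv
    refine ⟨ρ.symm ∘ v, ?_, ?_⟩
    · rw [← hmem]
      convert hv
      funext i; simp
    · funext i; simp
  · intro u _
    rw [aN_comp]
    congr 1
    apply Finset.prod_congr rfl
    intro p hp
    have hp' := ht hp
    simp only [PO, Finset.mem_filter, Finset.mem_univ, true_and] at hp'
    have e1 := h1 _ hp'.2.1
    have e2 := h1 _ hp'.2.2
    have : bef (ρ ∘ u) p.1 p.2 ↔ bef u p.1 p.2 := by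
      conv_lhs => rw [← e1, ← e2]
      simp [bef]
    simp only [sg, this]

lemma cf_nonneg {n : ℕ} {q : ℝ} (hq : q ∈ Set.Ioo (-1 : ℝ) 1) (P t : Finset (Fin n × Fin n)) :
    0 < cf q P t := by
  have h1 : 0 < (1 - q) / 2 := by linarith [hq.2]
  have h2 : 0 < (1 + q) / 2 := by linarith [hq.1]
  unfold cf
  positivity

lemma term_nonneg {n : ℕ} {q : ℝ} (hq : q ∈ Set.Ioo (-1 : ℝ) 1) (S T : Finset (Fin n))
    {t : Finset (Fin n × Fin n)} (ht : t ∈ (PO S T).powerset) :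
    0 ≤ cf q (PO S T) t * (F q S T t * F q Tᶜ Sᶜ t) := by
  apply mul_nonneg (cf_nonneg hq _ _).le
  by_cases hU : (U S T).Nonempty
  · obtain ⟨u, hu⟩ := hU
    rw [F_compl q (card_of_U hu) (Finset.mem_powerset.1 ht)]
    exact mul_self_nonneg _
  · have : U S T = ∅ := Finset.not_nonempty_iff_eq_empty.1 hU
    simp [F, this]

lemma total_pos {n : ℕ} {q : ℝ} (hq : q ∈ Set.Ioo (-1 : ℝ) 1) :
    0 < ∑ f : Word n, if V2 f then q ^ crW f else 0 := by
  rw [total_eq]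
  let S : Finset (Fin n) := So id
  let T : Finset (Fin n) := Se id
  have hid : (id : Half n) ∈ U S T := by
    simp only [U, Finset.mem_filter, Finset.mem_univ, true_and]
    exact ⟨fun i j h _ => h, rfl, rfl⟩
  have hST : ∀ l, l ∈ S → l ∈ T → False := by
    intro l h1 h2
    simp only [S, T, mem_So, mem_Se, id] at h1 h2
    obtain ⟨i, rfl, hi⟩ := h1
    obtain ⟨j, rfl, hj⟩ := h2
    exact hj hi
  have ha : ∀ u ∈ U S T, aN u = 0 := by
    intro u hu
    simp only [U, Finset.mem_filter, Finset.mem_univ, true_and] at hu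
    obtain ⟨hg, hs, ht⟩ := hu
    unfold aN
    rw [Finset.card_eq_zero, Finset.filter_eq_empty_iff]
    rintro ⟨l, l'⟩ - ⟨i, j, k, hij, hjk, hi, hj, hk, -⟩
    have hne : i ≠ k := (hij.trans hjk).ne
    by_cases e1 : Even i.1 <;> by_cases e2 : Even k.1
    · exact hne (hg i k (hi.trans hk.symm) (by tauto))
    · exact hST l (hs ▸ (mem_So u l).2 ⟨i, hi, e1⟩) (ht ▸ (mem_Se u l).2 ⟨k, hk, e2⟩)
    · exact hST l (hs ▸ (mem_So u l).2 ⟨k, hk, e2⟩) (ht ▸ (mem_Se u l).2 ⟨i, hi, e1⟩)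
    · exact hne (hg i k (hi.trans hk.symm) (by tauto))
  have hF : 0 < F q S T ∅ := by
    unfold F
    apply Finset.sum_pos
    · intro u hu
      simp [ha u hu]
    · exact ⟨_, hid⟩
  refine Finset.sum_pos' (fun S _ => Finset.sum_nonneg fun T _ => Finset.sum_nonneg
    fun t ht => term_nonneg hq S T ht) ⟨S, Finset.mem_univ _, ?_⟩
  refine Finset.sum_pos' (fun T _ => Finset.sum_nonneg
    fun t ht => term_nonneg hq S T ht) ⟨T, Finset.mem_univ _, ?_⟩
  refine Finset.sum_pos' (fun t ht => term_nonneg hq S T ht)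
    ⟨∅, Finset.empty_mem_powerset _, ?_⟩
  rw [F_compl q (card_of_U hid) (Finset.empty_subset _)]
  exact mul_pos (cf_nonneg hq _ _) (mul_pos hF hF)

lemma main_pos (n : ℕ) (hn : 1 ≤ n) {q : ℝ} (hq : q ∈ Set.Ioo (-1 : ℝ) 1) :
    0 < RpolyR n q := by
  have : NeZero n := ⟨by omega⟩
  have h := poly_eq n q
  have h2 := total_pos (n := n) hq
  rw [← h] at h2
  exact pos_of_mul_pos_right h2 (by positivity)

end PRP

/-- For `n ≥ 1`, `R_n(q) > 0` on `(-1,1)`; consequently `λ_n(q) = (R_n(q))^{1/(2n)}`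
is infinitely differentiable on `(-1,1)`. -/
theorem rpoly_pos_and_smooth (n : ℕ) (hn : 1 ≤ n) :
    (∀ q ∈ Set.Ioo (-1 : ℝ) 1, 0 < RpolyR n q) ∧
    ContDiffOn ℝ (⊤ : ℕ∞) (fun q : ℝ => RpolyR n q ^ ((1 : ℝ) / (2 * (n : ℝ))))
      (Set.Ioo (-1 : ℝ) 1) := by
  refine ⟨fun q hq => PRP.main_pos n hn hq, ?_⟩
  refine ContDiffOn.rpow_const_of_ne ?_ (fun q hq => (PRP.main_pos n hn hq).ne')
  apply ContDiff.contDiffOn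
  unfold RpolyR
  fun_prop
end
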